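/- arXiv:math/0211117 — 4 statements merged into one kernel-verified Lean document; each statement's English description precedes it below -/
import Mathlib

section
/- Renewal-operator version of Sarig's first main lemma: under the renewal setup, for every z ∈ 𝔻̄ ∖ {1} the operator S(z) = (I − R(z))/(1 − z) is invertible, the map z ↦ S(z)⁻¹ extends continuously to the closed disk 𝔻̄, and its restriction to S¹ belongs to A(𝒜), where 𝒜 is the Banach algebra of bounded operators on ℒ (i.e. its Fourier coefficients are summable in operator norm). Moreover, writing (I − R(z))⁻¹ = Σ_{n≥0} T_n zⁿ for z in the open unit disk, one has Σ_{n≥1} ‖T_n − T_{n−1}‖ < ∞. -/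
/-!
Write `A(z) = ∑ aₙ zⁿ` for the generating function of the tails `aₙ = ∑_{k > n} R k`. It has
summable coefficients, `(1 - z) A(z) = R(1) - R(z)` and `A(1) = R'(1)` (`exists_tails`). Although
`S(z) = (1 - R(z)) / (1 - z)` is singular at `1`, multiplying it by `E(z) = 1 - z (1 - P)` gives
`M(z) = S(z) E(z) = (1 - R(z)) (1 - P) + A(z) P`, because `R(1) P = P`. The coefficients of `M`
are summable, and `M(z)` is invertible on the whole closed disk: for `z ≠ 1` both factors are,
and `M(1) = (1 - R(1)) + R'(1) P` is block triangular with invertible diagonal blocks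
(`isUnit_symbol_at_one`). A Wiener lemma for operator-valued power series (`wiener_one_sided`)
then shows that `M(z)⁻¹` has summable coefficients, hence so has `S(z)⁻¹ = E(z) M(z)⁻¹ = ∑ uₙ zⁿ`.
The continuous extension and the Fourier coefficients are read off from this series, and
`(1 - R(z))⁻¹ = S(z)⁻¹ / (1 - z)` has coefficients `Tₙ = u₀ + ⋯ + uₙ`, so
`Tₙ₊₁ - Tₙ = uₙ₊₁` is summable.

The Wiener lemma is proved by a Gelfand-type argument (`exists_left_inv_of_symbol`). In a Banach
algebra `B` with a central element `s`, `‖s‖ ≤ 1`, an element `b = ∑ φ(mₙ) sⁿ` without left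
inverse lies in a maximal left ideal `J`, which is closed. By Schur's lemma and nonemptiness of
spectra, `s` acts on the simple module `B ⧸ J` as a scalar `z` with `‖z‖ ≤ 1`, so `b ≡ φ(m(z))`
modulo `J`, and this is a unit: a contradiction. The algebra `B` used is the commutant, among the
bounded operators on `ℓ¹(ℕ, A)`, of the shift and the right multiplications by constants. It is
the algebra of left convolution operators, and it is complete without further work.
-/

open MeasureTheory Filter Topology

/-- The `n`-th Fourier coefficient of a function `f : S¹ → 𝒜`. -/
noncomputable def fourierCoeffA {𝒜 : Type*} [NormedRing 𝒜] [NormedSpace ℂ 𝒜]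
    (f : ℂ → 𝒜) (n : ℤ) : 𝒜 :=
  ((2 * (Real.pi : ℂ)))⁻¹ • ∫ θ in (0:ℝ)..(2 * Real.pi),
    Complex.exp (-(n : ℂ) * Complex.I * (θ : ℂ)) • f (Complex.exp (Complex.I * (θ : ℂ)))

/-- `R(z) = Σ_{n} R_n zⁿ`. -/
noncomputable def renewalRz {L : Type*} [NormedAddCommGroup L] [NormedSpace ℂ L]
    (R : ℕ → L →L[ℂ] L) (z : ℂ) : L →L[ℂ] L := ∑' n : ℕ, z ^ n • R n

/-! ### Inversion modulo a central element -/

/-- Gelfand-type inversion: a power series in a central contraction `s` whose symbol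
`m(z) = ∑ zⁿ mₙ` is invertible on the closed unit disk is left invertible. -/
theorem exists_left_inv_of_symbol {A B : Type*} [NormedRing A] [NormedAlgebra ℂ A]
    [CompleteSpace A] [NormedRing B] [NormedAlgebra ℂ B] [CompleteSpace B]
    (φ : A →ₐ[ℂ] B) (hφ : Continuous φ) (s : B) (hs : ∀ b, s * b = b * s) (hs1 : ‖s‖ ≤ 1)
    (m : ℕ → A) (hm : Summable fun n => ‖m n‖)
    (hunit : ∀ z : ℂ, ‖z‖ ≤ 1 → IsUnit (∑' n, z ^ n • m n))
    (b : B) (hb : HasSum (fun n => φ (m n) * s ^ n) b) : ∃ t, t * b = 1 := by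
  by_contra hcon
  have hne : Ideal.span {b} ≠ ⊤ := by
    intro h
    have h1 : (1 : B) ∈ Ideal.span {b} := h ▸ Submodule.mem_top
    obtain ⟨t, ht⟩ := Ideal.mem_span_singleton'.1 h1
    exact hcon ⟨t, ht⟩
  obtain ⟨J, hJ, hbJ⟩ := Ideal.exists_le_maximal _ hne
  replace hbJ : b ∈ J := hbJ (Ideal.subset_span rfl)
  have hJcl : IsClosed (J : Set B) := inferInstance
  let J' : Submodule ℂ B := J.restrictScalars ℂ
  have : IsClosed (J' : Set B) := hJcl
  have hJ1 : (1 : B) ∉ J := fun h => hJ.ne_top ((Ideal.eq_top_iff_one _).2 h)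
  let X := B ⧸ J'
  have hmem : ∀ x : B, J'.mkQ x = 0 ↔ x ∈ J := fun x => by
    rw [Submodule.mkQ_apply, Submodule.Quotient.mk_eq_zero]; rfl
  have : Nontrivial X := ⟨J'.mkQ 1, 0, fun h => hJ1 ((hmem 1).1 h)⟩
  -- multiplication by `s` on the simple module `B ⧸ J`
  let f₀ : X →ₗ[ℂ] X := J'.mapQ J' (LinearMap.mulLeft ℂ s) (fun x hx => J.mul_mem_left s hx)
  have hf₀ : ∀ x : B, f₀ (J'.mkQ x) = J'.mkQ (s * x) := fun x => rfl
  let f : X →L[ℂ] X := f₀.mkContinuous 1 (fun x => by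
    refine le_of_forall_pos_le_add fun ε hε => ?_
    obtain ⟨y, rfl, hy⟩ := Submodule.Quotient.norm_mk_lt x hε
    have h1 : ‖f₀ (J'.mkQ y)‖ ≤ ‖s * y‖ := by
      rw [hf₀]; exact Submodule.Quotient.norm_mk_le _ _
    have h2 : ‖s * y‖ ≤ 1 * ‖y‖ :=
      (norm_mul_le _ _).trans (mul_le_mul_of_nonneg_right hs1 (norm_nonneg _))
    have h3 : ‖f₀ (Submodule.Quotient.mk y)‖ ≤ ‖s * y‖ := h1
    linarith)
  have hf : ∀ x : B, f (J'.mkQ x) = J'.mkQ (s * x) := fun x => rfl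
  have hf1 : ‖f‖ ≤ 1 := LinearMap.mkContinuous_norm_le _ zero_le_one _
  obtain ⟨z, hz⟩ := spectrum.nonempty f
  have hz1 : ‖z‖ ≤ 1 := (spectrum.norm_le_norm_of_mem hz).trans hf1
  set d : B := algebraMap ℂ B z - s with hd
  have hdc : ∀ x, d * x = x * d := fun x => by
    rw [hd, sub_mul, mul_sub, hs, Algebra.commutes]
  -- otherwise maximality of `J` makes `z - s` bijective on `B ⧸ J` (Schur's lemma)
  have hdJ : d ∈ J := by
    by_contra hdJ
    apply (spectrum.mem_iff.1 hz)
    have hg : ∀ x : B, (algebraMap ℂ (X →L[ℂ] X) z - f) (J'.mkQ x) = J'.mkQ (d * x) := by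
      intro x
      rw [hd, sub_mul, map_sub, ← hf, ← Algebra.smul_def, map_smul]
      simp [Algebra.algebraMap_eq_smul_one]
    rw [ContinuousLinearMap.isUnit_iff_bijective]
    constructor
    · rw [injective_iff_map_eq_zero]
      intro x
      obtain ⟨x, rfl⟩ := J'.mkQ_surjective x
      intro hx
      rw [hg, hmem] at hx
      rw [hmem]
      by_contra hxJ
      -- by maximality `1 = y * x + j`, hence `d = y * (d * x) + d * j ∈ J`
      obtain ⟨y, j, hj, hyj⟩ := Ideal.IsMaximal.exists_inv hJ hxJ
      apply hdJ
      have h : d = y * (d * x) + d * j := by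
        rw [← mul_assoc, ← hdc y, mul_assoc, ← mul_add, hyj, mul_one]
      rw [h]
      exact J.add_mem (J.mul_mem_left _ hx) (J.mul_mem_left _ hj)
    · intro x
      obtain ⟨x, rfl⟩ := J'.mkQ_surjective x
      obtain ⟨y, j, hj, hyj⟩ := Ideal.IsMaximal.exists_inv hJ hdJ
      refine ⟨J'.mkQ (x * y), ?_⟩
      have h : d * (x * y) = x - x * j := by
        rw [hdc, mul_assoc, eq_sub_of_add_eq hyj, mul_sub, mul_one]
      rw [hg, h, map_sub, (hmem _).2 (J.mul_mem_left x hj), sub_zero]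
  have hpow : ∀ n, s ^ n - algebraMap ℂ B (z ^ n) ∈ J := by
    intro n
    induction n with
    | zero => simp
    | succ n ih =>
      have : s ^ (n + 1) - algebraMap ℂ B (z ^ (n + 1)) =
          s * (s ^ n - algebraMap ℂ B (z ^ n)) - algebraMap ℂ B (z ^ n) * d := by
        rw [hd, pow_succ' s, pow_succ z, map_mul, mul_sub, mul_sub, hs (algebraMap ℂ B (z ^ n))]
        abel
      rw [this]
      exact J.sub_mem (J.mul_mem_left _ ih) (J.mul_mem_left _ hdJ)
  have hsum : HasSum (fun n => z ^ n • m n) (∑' n, z ^ n • m n) := by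
    refine Summable.hasSum (Summable.of_norm_bounded hm fun n => ?_)
    rw [norm_smul, norm_pow]
    exact mul_le_of_le_one_left (norm_nonneg _) (pow_le_one₀ (norm_nonneg _) hz1)
  have hsum2 : HasSum (fun n => φ (m n) * (s ^ n - algebraMap ℂ B (z ^ n)))
      (b - φ (∑' n, z ^ n • m n)) := by
    have h := hb.sub (hsum.map φ hφ)
    have he : (fun n => φ (m n) * (s ^ n - algebraMap ℂ B (z ^ n))) =
        fun n => φ (m n) * s ^ n - (φ ∘ fun n => z ^ n • m n) n := by
      funext n
      rw [Function.comp_apply, map_smul, mul_sub, Algebra.smul_def, Algebra.commutes]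
    rw [he]
    exact h
  have hlim : b - φ (∑' n, z ^ n • m n) ∈ J :=
    hJcl.mem_of_tendsto hsum2 (Eventually.of_forall fun F =>
      J.sum_mem fun n _ => J.mul_mem_left _ (hpow n))
  have hφJ : φ (∑' n, z ^ n • m n) ∈ J := by
    have := J.sub_mem hbJ hlim
    simpa using this
  exact hJ.ne_top (Ideal.eq_top_of_isUnit_mem _ hφJ ((hunit z hz1).map φ))

/-! ### The space `ℓ¹(ℕ, A)` and the Wiener lemma -/

section
variable {A : Type*} [NormedRing A] [NormedAlgebra ℂ A]
variable {F : Type*} [NormedAddCommGroup F] [NormedSpace ℂ F] [CompleteSpace F]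

/-- The Banach space `ℓ¹(ℕ, A)` of coefficient sequences. It is a type synonym, so that its
normed-space instances are not unfolded by unification. -/
def Ell1 (A : Type*) [NormedRing A] : Type _ := lp (fun _ : ℕ => A) 1

noncomputable instance (A : Type*) [NormedRing A] : NormedAddCommGroup (Ell1 A) :=
  inferInstanceAs (NormedAddCommGroup (lp (fun _ : ℕ => A) 1))

noncomputable instance (A : Type*) [NormedRing A] [NormedAlgebra ℂ A] : NormedSpace ℂ (Ell1 A) :=
  inferInstanceAs (NormedSpace ℂ (lp (fun _ : ℕ => A) 1))

instance (A : Type*) [NormedRing A] [CompleteSpace A] : CompleteSpace (Ell1 A) :=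
  inferInstanceAs (CompleteSpace (lp (fun _ : ℕ => A) 1))

/-- The coefficient functions on `ℓ¹(ℕ, A)`. -/
def Ell1.coeff {A : Type*} [NormedRing A] (x : Ell1 A) (n : ℕ) : A :=
  (show lp (fun _ : ℕ => A) 1 from x) n

/-- The embedding of `A` as the sequences supported at `n`, i.e. `a ↦ a Xⁿ`. -/
noncomputable def ell1Single (A : Type*) [NormedRing A] [NormedAlgebra ℂ A] (n : ℕ) :
    A →L[ℂ] Ell1 A :=
  lp.singleContinuousLinearMap ℂ (fun _ : ℕ => A) 1 n

theorem ell1_hasSum_norm {A : Type*} [NormedRing A] (x : Ell1 A) :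
    HasSum (fun n => ‖x.coeff n‖) ‖x‖ := by
  have h := lp.hasSum_norm (E := fun _ : ℕ => A) (p := 1) (by simp) x
  simp only [ENNReal.toReal_one, Real.rpow_one] at h
  exact h

theorem norm_ell1Single (n : ℕ) (a : A) : ‖ell1Single A n a‖ = ‖a‖ :=
  lp.norm_single (E := fun _ : ℕ => A) one_pos n a

theorem ell1_ext {F : Type*} [NormedAddCommGroup F] [NormedSpace ℂ F] {f g : Ell1 A →L[ℂ] F}
    (h : ∀ n a, f (ell1Single A n a) = g (ell1Single A n a)) : f = g :=
  lp.ext_continuousLinearMap (E := fun _ : ℕ => A) (p := 1) (by simp)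
    fun n => ContinuousLinearMap.ext fun a => h n a

/-- The universal property of `ℓ¹`: a family of maps `A → F` of norm at most `C` extends to
a bounded map `ℓ¹(ℕ, A) → F`. -/
theorem ell1_exists_lift (T : ℕ → A →L[ℂ] F) (C : ℝ) (hC : 0 ≤ C) (hT : ∀ n a, ‖T n a‖ ≤ C * ‖a‖) :
    ∃ f : Ell1 A →L[ℂ] F, ‖f‖ ≤ C ∧ (∀ n a, f (ell1Single A n a) = T n a) ∧
      ∀ x, HasSum (fun n => T n (x.coeff n)) (f x) := by
  have hs : ∀ x : Ell1 A, Summable fun n => ‖T n (x.coeff n)‖ := fun x =>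
    Summable.of_nonneg_of_le (fun _ => norm_nonneg _) (fun n => hT n _)
      ((ell1_hasSum_norm x).summable.mul_left C)
  let f₀ : Ell1 A →ₗ[ℂ] F :=
    { toFun := fun x => ∑' n, T n (x.coeff n)
      map_add' := fun x y => by
        have h : ∀ n, (x + y).coeff n = x.coeff n + y.coeff n := fun n => rfl
        simp only [h, map_add]
        exact (hs x).of_norm.tsum_add (hs y).of_norm
      map_smul' := fun c x => by
        have h : ∀ n, (c • x).coeff n = c • x.coeff n := fun n => rfl
        simp only [h, map_smul]
        exact (hs x).of_norm.tsum_const_smul c }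
  have hf₀ : ∀ x, ‖f₀ x‖ ≤ C * ‖x‖ := fun x => by
    rw [← (ell1_hasSum_norm x).tsum_eq, ← tsum_mul_left]
    exact (norm_tsum_le_tsum_norm (hs x)).trans
      ((hs x).tsum_le_tsum (fun n => hT n _) ((ell1_hasSum_norm x).summable.mul_left C))
  refine ⟨f₀.mkContinuous C hf₀, LinearMap.mkContinuous_norm_le _ hC _, fun n a => ?_,
    fun x => (hs x).of_norm.hasSum⟩
  change ∑' k, T k ((lp.single 1 n a : lp (fun _ : ℕ => A) 1) k) = T n a
  rw [tsum_eq_single n]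
  · simp
  · intro k hk
    simp [hk]

variable [CompleteSpace A]

/-- Wiener's lemma for power series with coefficients in a Banach algebra: if the symbol is
invertible on the closed unit disk, its inverse again has summable coefficients. -/
theorem wiener_one_sided (m : ℕ → A) (hm : Summable fun n => ‖m n‖)
    (hunit : ∀ z : ℂ, ‖z‖ ≤ 1 → IsUnit (∑' n, z ^ n • m n)) :
    ∃ t : ℕ → A, (Summable fun n => ‖t n‖) ∧
      ∀ z : ℂ, ‖z‖ ≤ 1 → (∑' n, z ^ n • t n) * (∑' n, z ^ n • m n) = 1 := by
  -- the shift, i.e. multiplication by the variable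
  obtain ⟨S, hS1, hS, -⟩ := ell1_exists_lift (fun n => ell1Single A (n + 1)) 1 zero_le_one
    (fun n a => by rw [norm_ell1Single, one_mul])
  -- left and right multiplications by constants
  have hl : ∀ a : A, ∃ f : Ell1 A →L[ℂ] Ell1 A, ‖f‖ ≤ ‖a‖ ∧
      ∀ n x, f (ell1Single A n x) = ell1Single A n (a * x) := fun a => by
    obtain ⟨f, h1, h2, -⟩ := ell1_exists_lift
      (fun n => (ell1Single A n).comp (ContinuousLinearMap.mul ℂ A a)) ‖a‖ (norm_nonneg _)
      (fun n x => by
        rw [ContinuousLinearMap.comp_apply, norm_ell1Single]; exact norm_mul_le _ _)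
    exact ⟨f, h1, fun n x => h2 n x⟩
  have hr : ∀ a : A, ∃ f : Ell1 A →L[ℂ] Ell1 A, ‖f‖ ≤ ‖a‖ ∧
      ∀ n x, f (ell1Single A n x) = ell1Single A n (x * a) := fun a => by
    obtain ⟨f, h1, h2, -⟩ := ell1_exists_lift
      (fun n => (ell1Single A n).comp ((ContinuousLinearMap.mul ℂ A).flip a)) ‖a‖ (norm_nonneg _)
      (fun n x => by
        rw [ContinuousLinearMap.comp_apply, norm_ell1Single, mul_comm]; exact norm_mul_le _ _)
    exact ⟨f, h1, fun n x => h2 n x⟩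
  choose l hl1 hl using hl
  choose r hr1 hr using hr
  -- the algebra of left convolution operators, realised as a commutant
  let B := Subalgebra.centralizer ℂ ({S} ∪ Set.range r : Set (Ell1 A →L[ℂ] Ell1 A))
  have hBcl : IsClosed (B : Set (Ell1 A →L[ℂ] Ell1 A)) := Set.isClosed_centralizer _
  have : CompleteSpace B := hBcl.completeSpace_coe
  have hB : ∀ f : Ell1 A →L[ℂ] Ell1 A, f ∈ B ↔ S * f = f * S ∧ ∀ a, r a * f = f * r a := by
    intro f
    simp [B, Subalgebra.mem_centralizer_iff]
  have hSB : S ∈ B := (hB S).2 ⟨rfl, fun a => ell1_ext fun n x => by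
    simp only [mul_apply_eq_comp, hr, hS]⟩
  have hlB : ∀ a, l a ∈ B := fun a => (hB _).2
    ⟨ell1_ext fun n x => by simp only [mul_apply_eq_comp, hl, hS],
     fun b => ell1_ext fun n x => by
      simp only [mul_apply_eq_comp, hl, hr, mul_assoc]⟩
  let φ : A →ₐ[ℂ] B :=
    { toFun := fun a => ⟨l a, hlB a⟩
      map_one' := Subtype.ext (ell1_ext fun n x => by simp [hl])
      map_mul' := fun a b => Subtype.ext (ell1_ext fun n x => by simp [hl, mul_assoc])
      map_zero' := Subtype.ext (ell1_ext fun n x => by simp [hl])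
      map_add' := fun a b => Subtype.ext (ell1_ext fun n x => by
        simp [hl, add_mul])
      commutes' := fun c => Subtype.ext (ell1_ext fun n x => by
        simp [hl, Algebra.algebraMap_eq_smul_one]) }
  have hφ : ∀ a, ‖φ a‖ ≤ 1 * ‖a‖ := fun a => by rw [one_mul]; exact hl1 a
  have hφc : Continuous φ := AddMonoidHomClass.continuous_of_bound φ 1 hφ
  let s : B := ⟨S, hSB⟩
  have hs1 : ‖s‖ ≤ 1 := hS1
  have hspow : ∀ n, ‖s ^ n‖ ≤ 1 := fun n => by
    induction n with
    | zero => rw [pow_zero]; exact ContinuousLinearMap.norm_id_le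
    | succ n ih =>
      rw [pow_succ]
      exact (norm_mul_le _ _).trans (mul_le_one₀ ih (norm_nonneg _) hs1)
  have hsum : Summable fun n => φ (m n) * s ^ n := by
    refine Summable.of_norm_bounded hm fun n => (norm_mul_le _ _).trans ?_
    have h1 := hφ (m n)
    rw [one_mul] at h1
    exact (mul_le_mul h1 (hspow n) (norm_nonneg _) (norm_nonneg _)).trans_eq (mul_one _)
  obtain ⟨T, hT⟩ := exists_left_inv_of_symbol φ hφc s
    (fun b => Subtype.ext ((hB _).1 b.2).1) hs1 m hm hunit _ hsum.hasSum
  have hSpow : ∀ k n a, (S ^ k) (ell1Single A n a) = ell1Single A (n + k) a := by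
    intro k
    induction k with
    | zero => intro n a; simp
    | succ k ih =>
      intro n a
      rw [pow_succ, mul_apply_eq_comp, hS, ih, add_right_comm, add_assoc]
  set e : Ell1 A := ell1Single A 0 1 with he
  set t : Ell1 A := (T : Ell1 A →L[ℂ] Ell1 A) e with ht
  have hTS : ∀ n, (T : Ell1 A →L[ℂ] Ell1 A) * S ^ n = S ^ n * (T : Ell1 A →L[ℂ] Ell1 A) :=
    fun n => (Commute.pow_left ((hB _).1 T.2).1 n).symm
  have hTr : ∀ a, r a * (T : Ell1 A →L[ℂ] Ell1 A) = (T : Ell1 A →L[ℂ] Ell1 A) * r a :=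
    ((hB _).1 T.2).2
  -- the identity `T * M = 1` read at `e`, moving `T` past shifts and right multiplications
  have hte : HasSum (fun n => (S ^ n) (r (m n) t)) e := by
    have h1 : HasSum (fun n => ((T : Ell1 A →L[ℂ] Ell1 A) * (l (m n) * S ^ n)) e) e := by
      have h2 := (hsum.hasSum.mul_left T).mapL
        ((ContinuousLinearMap.apply ℂ (Ell1 A) e).comp B.toSubmodule.subtypeL)
      rw [hT] at h2
      exact h2
    refine (funext fun n => ?_ : (fun n => (S ^ n) (r (m n) t)) = _) ▸ h1
    have h3 : (l (m n) * S ^ n) e = (S ^ n * r (m n)) e := by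
      simp only [mul_apply_eq_comp, he, hSpow, hl, hr, one_mul, mul_one]
    rw [mul_apply_eq_comp, h3]
    change (S ^ n * (r (m n) * (T : Ell1 A →L[ℂ] Ell1 A))) e = _
    rw [hTr, ← mul_assoc, ← hTS, mul_assoc]
    rfl
  refine ⟨t.coeff, (ell1_hasSum_norm t).summable, fun z hz => ?_⟩
  -- evaluation at `z`
  obtain ⟨ev, -, hev, hevs⟩ := ell1_exists_lift
    (fun n => (z ^ n) • ContinuousLinearMap.id ℂ A) 1 zero_le_one (fun n a => by
      simp only [smul_apply, ContinuousLinearMap.id_apply, norm_smul, norm_pow]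
      exact mul_le_mul_of_nonneg_right (pow_le_one₀ (norm_nonneg _) hz) (norm_nonneg _))
  have hevt : ev t = ∑' n, z ^ n • t.coeff n := (hevs t).tsum_eq.symm
  have hevS : ∀ n x, ev ((S ^ n) x) = z ^ n • ev x := fun n x => by
    have : ev.comp (S ^ n) = z ^ n • ev := ell1_ext fun k a => by
      simp [hSpow, hev, smul_smul, pow_add, mul_comm]
    exact DFunLike.congr_fun this x
  have hevr : ∀ a x, ev (r a x) = ev x * a := fun a x => by
    have : ev.comp (r a) = ((ContinuousLinearMap.mul ℂ A).flip a).comp ev := ell1_ext fun k b => by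
      simp [hr, hev]
    exact DFunLike.congr_fun this x
  have hmz : Summable fun n => z ^ n • m n := by
    refine Summable.of_norm_bounded hm fun n => ?_
    rw [norm_smul, norm_pow]
    exact mul_le_of_le_one_left (norm_nonneg _) (pow_le_one₀ (norm_nonneg _) hz)
  rw [← hevt, ← hmz.tsum_mul_left]
  have h := hte.mapL ev
  have he1 : ev e = 1 := by rw [he, hev]; simp
  rw [he1] at h
  rw [← h.tsum_eq]
  refine tsum_congr fun n => ?_
  rw [hevS, hevr, mul_smul_comm]
end

/-! ### Power series with summable coefficients -/

section Coefficients

variable {A : Type*} [NormedRing A] [NormedAlgebra ℂ A] [CompleteSpace A]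

theorem summable_pow_smul {u : ℕ → A} (hu : Summable fun n => ‖u n‖) {z : ℂ} (hz : ‖z‖ ≤ 1) :
    Summable fun n => z ^ n • u n := by
  refine Summable.of_norm_bounded hu fun n => ?_
  rw [norm_smul, norm_pow]
  exact mul_le_of_le_one_left (norm_nonneg _) (pow_le_one₀ (norm_nonneg _) hz)

theorem summable_fourierCoeffA {u : ℕ → A} (hu : Summable fun n => ‖u n‖) :
    Summable fun n : ℤ => ‖fourierCoeffA (fun z : ℂ => ∑' k, z ^ k • u k) n‖ := by
  have hnorm : ∀ θ : ℝ, ‖Complex.exp (Complex.I * θ)‖ = 1 := fun θ => by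
    rw [mul_comm]; exact Complex.norm_exp_ofReal_mul_I θ
  have hnorm' : ∀ (n : ℤ) (θ : ℝ), ‖Complex.exp (-(n : ℂ) * Complex.I * θ)‖ = 1 := fun n θ => by
    rw [show -(n : ℂ) * Complex.I * θ = ((-(n : ℝ) * θ : ℝ) : ℂ) * Complex.I by push_cast; ring]
    exact Complex.norm_exp_ofReal_mul_I _
  have hint : ∀ (n : ℤ) (k : ℕ), (∫ θ in (0:ℝ)..(2 * Real.pi),
      Complex.exp (-(n : ℂ) * Complex.I * (θ : ℂ)) • Complex.exp (Complex.I * (θ : ℂ)) ^ k • u k)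
      = if (k : ℤ) = n then (2 * (Real.pi : ℂ)) • u k else 0 := by
    intro n k
    have h1 : ∀ θ : ℝ, Complex.exp (-(n : ℂ) * Complex.I * (θ : ℂ)) •
        Complex.exp (Complex.I * (θ : ℂ)) ^ k • u k =
        Complex.exp ((((k : ℤ) - n : ℤ) : ℂ) * Complex.I * θ) • u k := fun θ => by
      rw [smul_smul, ← Complex.exp_nat_mul, ← Complex.exp_add]
      congr 2
      push_cast
      ring
    simp_rw [h1]
    rw [intervalIntegral.integral_smul_const]
    split_ifs with h
    · subst h
      simp
    · have hne : (((k : ℤ) - n : ℤ) : ℂ) * Complex.I ≠ 0 :=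
        mul_ne_zero (Int.cast_ne_zero.2 (sub_ne_zero.2 h)) Complex.I_ne_zero
      rw [integral_exp_mul_complex hne]
      have h2 : Complex.exp ((((k : ℤ) - n : ℤ) : ℂ) * Complex.I * ((2 * Real.pi : ℝ) : ℂ)) = 1 :=
        Complex.exp_eq_one_iff.2 ⟨(k : ℤ) - n, by push_cast; ring⟩
      rw [h2]
      simp
  have hcoeff : ∀ n : ℤ, fourierCoeffA (fun z : ℂ => ∑' k, z ^ k • u k) n =
      ∑' k : ℕ, if (k : ℤ) = n then u k else 0 := by
    intro n
    have h := intervalIntegral.hasSum_integral_of_dominated_convergence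
      (μ := volume) (a := 0) (b := 2 * Real.pi)
      (F := fun (k : ℕ) (θ : ℝ) => Complex.exp (-(n : ℂ) * Complex.I * (θ : ℂ)) •
        Complex.exp (Complex.I * (θ : ℂ)) ^ k • u k)
      (f := fun θ : ℝ => Complex.exp (-(n : ℂ) * Complex.I * (θ : ℂ)) •
        ∑' k, Complex.exp (Complex.I * (θ : ℂ)) ^ k • u k)
      (fun k _ => ‖u k‖)
      (fun k => Continuous.aestronglyMeasurable (by fun_prop))
      (fun k => Eventually.of_forall fun θ _ => by
        rw [norm_smul, norm_smul, norm_pow, hnorm, hnorm', one_pow, one_mul, one_mul])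
      (Eventually.of_forall fun θ _ => hu)
      intervalIntegrable_const
      (Eventually.of_forall fun θ _ =>
        (summable_pow_smul hu (hnorm θ).le).hasSum.const_smul _)
    have h2 := h.const_smul ((2 * (Real.pi : ℂ))⁻¹)
    rw [fourierCoeffA, ← h2.tsum_eq]
    refine tsum_congr fun k => ?_
    rw [hint]
    split_ifs
    · rw [smul_smul, inv_mul_cancel₀, one_smul]
      exact mul_ne_zero two_ne_zero (Complex.ofReal_ne_zero.2 Real.pi_ne_zero)
    · rw [smul_zero]
  refine Summable.of_nat_of_neg_add_one ?_ ?_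
  · refine hu.congr fun n => ?_
    rw [hcoeff, tsum_eq_single n (fun k hk => if_neg (by exact_mod_cast hk)), if_pos rfl]
  · refine summable_zero.congr fun n => ?_
    have h0 : ∀ k : ℕ, (if (k : ℤ) = -((n : ℤ) + 1) then u k else 0) = 0 := fun k =>
      if_neg (by omega)
    rw [hcoeff, tsum_congr h0, tsum_zero, norm_zero]

/-- The tails `a n = ∑_{k > n} R k` are summable, and summation by parts identifies their
generating function and its value at `1`. -/
theorem exists_tails {R : ℕ → A} (hR0 : R 0 = 0)
    (hRsum : Summable fun n : ℕ => (n : ℝ) * ‖R n‖) :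
    ∃ a : ℕ → A, (Summable fun n => ‖a n‖) ∧
      (∀ z : ℂ, ‖z‖ ≤ 1 → (1 - z) • ∑' n, z ^ n • a n = ∑' n, R n - ∑' n, z ^ n • R n) ∧
      ∑' n, a n = ∑' n : ℕ, (n : ℂ) • R n := by
  have hRn : Summable fun n => ‖R n‖ := by
    refine Summable.of_nonneg_of_le (fun _ => norm_nonneg _) (fun n => ?_) hRsum
    rcases Nat.eq_zero_or_pos n with rfl | hn
    · simp [hR0]
    · exact le_mul_of_one_le_left (norm_nonneg _) (by exact_mod_cast hn)
  have hRs : Summable R := hRn.of_norm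
  let g : ℕ × ℕ → A := fun p => R (p.1 + p.2 + 1)
  let e := Finset.HasAntidiagonal.sigmaAntidiagonalEquivProd (A := ℕ)
  have hge : ∀ x : Σ n : ℕ, Finset.HasAntidiagonal.antidiagonal n, g (e x) = R (x.1 + 1) := by
    rintro ⟨n, p, hp⟩
    have := Finset.HasAntidiagonal.mem_antidiagonal.1 hp
    change R (p.1 + p.2 + 1) = _
    rw [this]
  have hg : Summable fun p => ‖g p‖ := by
    rw [← e.summable_iff]
    refine (summable_sigma_of_nonneg (fun _ => norm_nonneg _)).2 ?_
    refine ⟨fun n => Summable.of_finite, ?_⟩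
    refine ((summable_nat_add_iff 1).2 hRsum).congr fun n => ?_
    simp only [hge, tsum_fintype]
    simp
  let a : ℕ → A := fun n => ∑' k, R (n + k + 1)
  have hat : ∀ n, Summable fun k => R (n + k + 1) := fun n => by
    have := (summable_nat_add_iff (n + 1)).2 hRs
    refine this.congr fun k => ?_
    congr 1
    ring
  have ha : Summable fun n => ‖a n‖ := by
    refine Summable.of_nonneg_of_le (fun _ => norm_nonneg _) (fun n => ?_) hg.prod
    exact norm_tsum_le_tsum_norm (hg.prod_factor n)
  have hstep : ∀ n, a n = R (n + 1) + a (n + 1) := fun n => by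
    change ∑' k, R (n + k + 1) = _
    rw [(hat n).tsum_eq_zero_add]
    congr 1
    refine tsum_congr fun k => ?_
    congr 1
    ring
  have ha0 : a 0 = ∑' n, R n := by
    rw [hRs.tsum_eq_zero_add, hR0, zero_add]
    exact tsum_congr fun k => by rw [zero_add]
  refine ⟨a, ha, fun z hz => ?_, ?_⟩
  · have hza := summable_pow_smul ha hz
    have hzR := summable_pow_smul hRn hz
    have h1 := hza.tsum_eq_zero_add
    have h2 := hzR.tsum_eq_zero_add
    rw [hR0, smul_zero, zero_add] at h2
    have h3 : ∑' n, z ^ (n + 1) • a (n + 1) + ∑' n, z ^ (n + 1) • R (n + 1) =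
        z • ∑' n, z ^ n • a n := by
      rw [← ((summable_nat_add_iff 1).2 hza).tsum_add ((summable_nat_add_iff 1).2 hzR),
        ← hza.tsum_const_smul]
      refine tsum_congr fun n => ?_
      rw [← smul_add, add_comm (a (n + 1)), ← hstep, smul_smul, pow_succ']
    rw [sub_smul, one_smul, ← h3, ← h2]
    nth_rewrite 1 [h1]
    rw [pow_zero, one_smul, ha0]
    abel
  · have h1 : ∑' n, a n = ∑' p, g p := (hg.of_norm.tsum_prod).symm
    rw [h1, ← e.tsum_eq]
    have h2 : Summable fun x => g (e x) := e.summable_iff.2 hg.of_norm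
    rw [h2.tsum_sigma]
    have hs : Summable fun n : ℕ => (n : ℂ) • R n :=
      Summable.of_norm (hRsum.congr fun n => by rw [norm_smul, Complex.norm_natCast])
    rw [hs.tsum_eq_zero_add, Nat.cast_zero, zero_smul, zero_add]
    refine tsum_congr fun n => ?_
    simp only [hge, tsum_fintype]
    simp [← Nat.cast_smul_eq_nsmul ℂ]

theorem hasSum_partialSums {u : ℕ → A} (hu : Summable fun n => ‖u n‖) {z : ℂ} (hz : ‖z‖ < 1) :
    HasSum (fun n => z ^ n • ∑ k ∈ Finset.range (n + 1), u k)
      ((1 - z)⁻¹ • ∑' n, z ^ n • u n) := by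
  set T : ℕ → A := fun n => ∑ k ∈ Finset.range (n + 1), u k with hT
  have hTb : ∀ n, ‖T n‖ ≤ ∑' k, ‖u k‖ := fun n =>
    (norm_sum_le _ _).trans (hu.sum_le_tsum _ fun _ _ => norm_nonneg _)
  have hs : Summable fun n => z ^ n • T n := by
    refine Summable.of_norm_bounded
      ((summable_geometric_of_lt_one (norm_nonneg z) hz).mul_right (∑' k, ‖u k‖)) fun n => ?_
    rw [norm_smul, norm_pow]
    exact mul_le_mul_of_nonneg_left (hTb n) (by positivity)
  have hzu := summable_pow_smul hu hz.le
  have h3 : z • ∑' n, z ^ n • T n + ∑' n, z ^ (n + 1) • u (n + 1) =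
      ∑' n, z ^ (n + 1) • T (n + 1) := by
    rw [← hs.tsum_const_smul,
      ← (hs.const_smul z).tsum_add ((summable_nat_add_iff 1).2 hzu)]
    refine tsum_congr fun n => ?_
    rw [smul_smul, ← pow_succ', ← smul_add]
    congr 1
    exact (Finset.sum_range_succ u (n + 1)).symm
  have h4 : (1 - z) • ∑' n, z ^ n • T n = ∑' n, z ^ n • u n := by
    rw [sub_smul, one_smul, hzu.tsum_eq_zero_add]
    nth_rewrite 1 [hs.tsum_eq_zero_add]
    rw [← h3, pow_zero, one_smul, one_smul, show T 0 = u 0 by simp [hT]]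
    abel
  have hz1 : (1 - z) ≠ 0 := by
    intro h
    rw [← sub_eq_zero.1 h] at hz
    simp at hz
  rw [← h4, smul_smul, inv_mul_cancel₀ hz1, one_smul]
  exact hs.hasSum

/-- At `z = 1` the regularised symbol is `(1 - R(1)) + A(1) P`, block triangular with respect
to `P`; `Q + c⁻¹ P` inverts its diagonal part, and the remaining off-diagonal part
`(1 - P) A(1) P` squares to zero. Here `D = 1 - R(1)`, `V = A(1)` and `c = μ`. -/
theorem isUnit_symbol_at_one {A : Type*} [NormedRing A] [NormedAlgebra ℂ A] {D P Q V : A} {c : ℂ} (hc : c ≠ 0) (hPP : P * P = P)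
    (hDP : D * P = 0) (hQD : Q * D = 1 - P) (hDQ : D * Q = 1 - P)
    (hPQ : P * Q = 0) (hPD : P * D = 0) (hPVP : P * V * P = c • P) :
    IsUnit (D * (1 - P) + V * P) := by
  have hD : D * (1 - P) = D := by rw [mul_sub, hDP, mul_one, sub_zero]
  rw [hD]
  have hPVP' : P * (V * P) = c • P := by rw [← mul_assoc, hPVP]
  have hVPP : V * P * P = V * P := by rw [mul_assoc, hPP]
  have hVPQ : V * P * Q = 0 := by rw [mul_assoc, hPQ, mul_zero]
  -- the inverse `(1 - Q V P)(Q + c⁻¹ P)`, expanded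
  refine ⟨⟨D + V * P, Q + c⁻¹ • P - c⁻¹ • (Q * (V * P)), ?_, ?_⟩, rfl⟩
  · have e1 : c⁻¹ • (D * (Q * (V * P))) = c⁻¹ • (V * P) - P := by
      rw [← mul_assoc, hDQ, sub_mul, one_mul, hPVP', smul_sub, smul_smul, inv_mul_cancel₀ hc,
        one_smul]
    have e2 : V * P * (Q * (V * P)) = 0 := by rw [← mul_assoc, hVPQ, zero_mul]
    rw [mul_sub, mul_add, mul_smul_comm, mul_smul_comm, add_mul, add_mul, add_mul, hDQ, hDP, hVPQ,
      hVPP, e2, add_zero, add_zero, zero_add, e1]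
    abel
  · have e1 : Q * (V * P) * D = 0 := by
      rw [mul_assoc, mul_assoc, hPD, mul_zero, mul_zero]
    have e2 : Q * (V * P) * (V * P) = c • (Q * (V * P)) := by
      rw [mul_assoc, mul_assoc V, hPVP', mul_smul_comm, mul_smul_comm]
    simp only [sub_mul, mul_add, add_mul, smul_mul_assoc, hQD, hPD, hPVP', e1, e2,
      smul_smul, inv_mul_cancel₀ hc, one_smul, smul_zero]
    abel

end Coefficients

/-! ### The regularised symbol -/

section Renewal

variable {A : Type*} [NormedRing A] [NormedAlgebra ℂ A] [CompleteSpace A]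

/-- The inverse of `S(z) = (1 - R(z)) / (1 - z)` is given by a power series with absolutely
summable coefficients. -/
theorem exists_inverse_coeff {R : ℕ → A} (hR0 : R 0 = 0)
    (hRsum : Summable fun n : ℕ => (n : ℝ) * ‖R n‖) {P Q : A} (hPP : P * P = P)
    (hPR : P * ∑' n, R n = P) (hRP : (∑' n, R n) * P = P)
    (hQD : Q * (1 - ∑' n, R n) = 1 - P) (hDQ : (1 - ∑' n, R n) * Q = 1 - P)
    (hPQ : P * Q = 0)
    (hinv : ∀ z : ℂ, ‖z‖ ≤ 1 → z ≠ 1 → IsUnit (1 - ∑' n, z ^ n • R n))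
    {c : ℂ} (hc : c ≠ 0) (hPRP : P * (∑' n : ℕ, (n : ℂ) • R n) * P = c • P) :
    ∃ u : ℕ → A, (Summable fun n => ‖u n‖) ∧ ∀ z : ℂ, ‖z‖ ≤ 1 → z ≠ 1 →
      ((1 - z)⁻¹ • (1 - ∑' n, z ^ n • R n)) * (∑' n, z ^ n • u n) = 1 := by
  obtain ⟨a, ha, haz, ha1⟩ := exists_tails hR0 hRsum
  have hRn : Summable fun n => ‖R n‖ := by
    refine Summable.of_nonneg_of_le (fun _ => norm_nonneg _) (fun n => ?_) hRsum
    rcases Nat.eq_zero_or_pos n with rfl | hn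
    · simp [hR0]
    · exact le_mul_of_one_le_left (norm_nonneg _) (by exact_mod_cast hn)
  -- coefficients of the regularised symbol `M(z) = (1 - R(z)) (1 - P) + A(z) P`
  let m : ℕ → A := fun n => (Pi.single (M := fun _ : ℕ => A) 0 1 n - R n) * (1 - P) + a n * P
  have hδ : Summable fun n => ‖Pi.single (M := fun _ : ℕ => A) 0 1 n‖ :=
    (hasSum_single 0 fun n hn => by simp [hn]).summable
  have hm : Summable fun n => ‖m n‖ := by
    refine Summable.of_nonneg_of_le (fun _ => norm_nonneg _) (fun n => ?_)
      (((hδ.add hRn).mul_right ‖1 - P‖).add (ha.mul_right ‖P‖))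
    refine (norm_add_le _ _).trans (add_le_add ((norm_mul_le _ _).trans ?_) (norm_mul_le _ _))
    exact mul_le_mul_of_nonneg_right (norm_sub_le _ _) (norm_nonneg _)
  have hmz : ∀ z : ℂ, ‖z‖ ≤ 1 → ∑' n, z ^ n • m n =
      (1 - ∑' n, z ^ n • R n) * (1 - P) + (∑' n, z ^ n • a n) * P := by
    intro z hz
    have h1 : HasSum (fun n => z ^ n • Pi.single (M := fun _ : ℕ => A) 0 1 n) 1 := by
      have := hasSum_single (f := fun n => z ^ n • Pi.single (M := fun _ : ℕ => A) 0 1 n) 0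
        fun n hn => by simp [hn]
      simpa using this
    have h2 := ((h1.sub (summable_pow_smul hRn hz).hasSum).mul_right (1 - P)).add
      ((summable_pow_smul ha hz).hasSum.mul_right P)
    rw [← h2.tsum_eq]
    refine tsum_congr fun n => ?_
    rw [← smul_sub, smul_mul_assoc, smul_mul_assoc, ← smul_add]
  -- `S(z) E(z) = M(z)` with `E(z) = 1 - z (1 - P)`
  have hfac : ∀ z : ℂ, ‖z‖ ≤ 1 → z ≠ 1 →
      ((1 - z)⁻¹ • (1 - ∑' n, z ^ n • R n)) * (1 - z • (1 - P)) = ∑' n, z ^ n • m n := by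
    intro z hz hz1
    have hz0 : 1 - z ≠ 0 := sub_ne_zero.2 hz1.symm
    have hE : (1 : A) - z • (1 - P) = (1 - z) • (1 - P) + P := by
      rw [sub_smul, one_smul]; abel
    have h1 : (∑' n, z ^ n • a n) * P = (1 - z)⁻¹ • ((1 - ∑' n, z ^ n • R n) * P) := by
      have h2 : (1 - ∑' n, z ^ n • R n) * P = (∑' n, R n - ∑' n, z ^ n • R n) * P := by
        rw [sub_mul, sub_mul, hRP, one_mul]
      rw [h2, ← haz z hz, smul_mul_assoc, smul_smul, inv_mul_cancel₀ hz0, one_smul]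
    rw [hmz z hz, h1, hE, mul_add, smul_mul_smul_comm, inv_mul_cancel₀ hz0, one_smul,
      smul_mul_assoc]
  have hunit : ∀ z : ℂ, ‖z‖ ≤ 1 → IsUnit (∑' n, z ^ n • m n) := by
    intro z hz
    by_cases hz1 : z = 1
    · subst hz1
      rw [hmz 1 hz]
      simp only [one_pow, one_smul]
      refine isUnit_symbol_at_one hc hPP ?_ hQD hDQ hPQ ?_ ?_
      · rw [sub_mul, hRP, one_mul, sub_self]
      · rw [mul_sub, hPR, mul_one, sub_self]
      · rw [ha1, hPRP]
    · have hz0 : 1 - z ≠ 0 := sub_ne_zero.2 (Ne.symm hz1)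
      rw [← hfac z hz hz1]
      refine ((hinv z hz hz1).smul (Units.mk0 _ (inv_ne_zero hz0))).mul ?_
      have key : ∀ x y : ℂ, x * y = 1 → ((x • (1 - P) + P) * (y • (1 - P) + P) = 1) := by
        intro x y hxy
        have e1 : (1 - P) * (1 - P) = 1 - P := by
          rw [mul_sub, sub_mul, sub_mul, hPP]; simp
        have e2 : (1 - P) * P = 0 := by rw [sub_mul, hPP, one_mul, sub_self]
        have e3 : P * (1 - P) = 0 := by rw [mul_sub, hPP, mul_one, sub_self]
        rw [add_mul, mul_add, mul_add, smul_mul_smul_comm, hxy, e1, smul_mul_assoc, e2,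
          mul_smul_comm, e3, hPP]
        simp
      have hE : (1 : A) - z • (1 - P) = (1 - z) • (1 - P) + P := by
        rw [sub_smul, one_smul]; abel
      rw [hE]
      exact ⟨⟨_, _, key _ _ (mul_inv_cancel₀ hz0), key _ _ (inv_mul_cancel₀ hz0)⟩, rfl⟩
  obtain ⟨t, ht, htz⟩ := wiener_one_sided m hm hunit
  -- coefficients of `E(z) M(z)⁻¹`
  let t' : ℕ → A := fun n => Nat.casesOn n 0 t
  have ht' : Summable fun n => ‖t' n‖ := (summable_nat_add_iff 1).1 ht
  refine ⟨fun n => t n - (1 - P) * t' n, ?_, fun z hz hz1 => ?_⟩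
  · refine Summable.of_nonneg_of_le (fun _ => norm_nonneg _) (fun n => ?_)
      (ht.add (ht'.mul_left ‖1 - P‖))
    exact (norm_sub_le _ _).trans (add_le_add le_rfl (norm_mul_le _ _))
  · have hs := summable_pow_smul ht hz
    have hs' := summable_pow_smul ht' hz
    have h1 : ∑' n, z ^ n • t' n = z • ∑' n, z ^ n • t n := by
      rw [hs'.tsum_eq_zero_add, ← hs.tsum_const_smul]
      change z ^ 0 • (0 : A) + ∑' n, z ^ (n + 1) • t n = _
      rw [smul_zero, zero_add]
      exact tsum_congr fun n => by rw [smul_smul, pow_succ']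
    have h2 : ∑' n, z ^ n • (t n - (1 - P) * t' n) = (1 - z • (1 - P)) * ∑' n, z ^ n • t n := by
      have h3 := (hs.hasSum.sub (hs'.hasSum.mul_left (1 - P))).tsum_eq
      rw [h1] at h3
      rw [sub_mul, one_mul, smul_mul_assoc, ← mul_smul_comm, ← h3]
      refine tsum_congr fun n => ?_
      rw [smul_sub, mul_smul_comm]
    rw [h2, ← mul_assoc, hfac z hz hz1]
    -- a left inverse of a unit is a right inverse
    obtain ⟨v, hv⟩ := hunit z hz
    have h4 := htz z hz
    rw [← hv] at h4 ⊢
    rw [Units.eq_inv_of_mul_eq_one_right h4, Units.mul_inv]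

end Renewal

/-- Renewal-operator version of Sarig's first main lemma. -/
theorem sarig_first_main_lemma {L : Type*} [NormedAddCommGroup L] [NormedSpace ℂ L]
    [CompleteSpace L]
    (R : ℕ → L →L[ℂ] L) (hR0 : R 0 = 0)
    (hRsum : Summable fun n : ℕ => (n : ℝ) * ‖R n‖)
    (P : L →L[ℂ] L) (hPne : P ≠ 0) (hPproj : P * P = P)
    (hPrank : Module.finrank ℂ (LinearMap.range (P : L →ₗ[ℂ] L)) = 1)
    (hPR : P * renewalRz R 1 = P) (hRP : renewalRz R 1 * P = P)
    (hker : ∃ Q : L →L[ℂ] L, Q * (1 - renewalRz R 1) = 1 - P ∧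
      (1 - renewalRz R 1) * Q = 1 - P ∧ Q * P = 0 ∧ P * Q = 0)
    (hinv : ∀ z : ℂ, ‖z‖ ≤ 1 → z ≠ 1 → IsUnit (1 - renewalRz R z))
    (μ : ℝ) (hμ : μ ≠ 0)
    (hPRP : P * (∑' n : ℕ, (n : ℂ) • R n) * P = (μ : ℂ) • P) :
    (∀ z : ℂ, ‖z‖ ≤ 1 → z ≠ 1 → IsUnit ((1 - z)⁻¹ • (1 - renewalRz R z))) ∧
    (∃ Sext : ℂ → L →L[ℂ] L,
      ContinuousOn Sext (Metric.closedBall (0:ℂ) 1) ∧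
      (∀ z ∈ Metric.closedBall (0:ℂ) 1, z ≠ 1 →
        Sext z = Ring.inverse ((1 - z)⁻¹ • (1 - renewalRz R z))) ∧
      Summable fun n : ℤ => ‖fourierCoeffA Sext n‖) ∧
    (∃ T : ℕ → L →L[ℂ] L,
      (∀ z ∈ Metric.ball (0:ℂ) 1,
        HasSum (fun n => z ^ n • T n) (Ring.inverse (1 - renewalRz R z))) ∧
      Summable fun n : ℕ => ‖T (n + 1) - T n‖) := by
  obtain ⟨Q, hQD, hDQ, -, hPQ⟩ := hker
  have hR1 : renewalRz R 1 = ∑' n, R n := by simp [renewalRz]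
  rw [hR1] at hPR hRP hQD hDQ
  obtain ⟨u, hu, huz⟩ := exists_inverse_coeff hR0 hRsum hPproj hPR hRP hQD hDQ hPQ hinv
    (Complex.ofReal_ne_zero.2 hμ) hPRP
  have hunit : ∀ z : ℂ, ‖z‖ ≤ 1 → z ≠ 1 → IsUnit ((1 - z)⁻¹ • (1 - renewalRz R z)) :=
    fun z hz hz1 => (hinv z hz hz1).smul
      (Units.mk0 _ (inv_ne_zero (sub_ne_zero.2 (Ne.symm hz1))))
  have hSinv : ∀ z : ℂ, ‖z‖ ≤ 1 → z ≠ 1 →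
      ∑' n, z ^ n • u n = Ring.inverse ((1 - z)⁻¹ • (1 - renewalRz R z)) := by
    intro z hz hz1
    have h := huz z hz hz1
    obtain ⟨v, hv⟩ := hunit z hz hz1
    change ((1 - z)⁻¹ • (1 - renewalRz R z)) * _ = 1 at h
    rw [← hv] at h ⊢
    rw [Ring.inverse_unit]
    exact Units.eq_inv_of_mul_eq_one_left h
  refine ⟨hunit, ⟨fun z => ∑' n, z ^ n • u n, ?_, fun z hz hz1 => ?_, ?_⟩,
    fun n => ∑ k ∈ Finset.range (n + 1), u k, fun z hz => ?_, ?_⟩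
  · refine continuousOn_tsum (fun n => by fun_prop) hu fun n z hz => ?_
    rw [norm_smul, norm_pow]
    exact mul_le_of_le_one_left (norm_nonneg _)
      (pow_le_one₀ (norm_nonneg _) (mem_closedBall_zero_iff.1 hz))
  · exact hSinv z (mem_closedBall_zero_iff.1 hz) hz1
  · exact summable_fourierCoeffA hu
  · have hz' : ‖z‖ < 1 := mem_ball_zero_iff.1 hz
    have hz1 : z ≠ 1 := by
      rintro rfl
      simp at hz'
    have h := hasSum_partialSums hu hz'
    have hval : (1 - z)⁻¹ • ∑' n, z ^ n • u n = Ring.inverse (1 - renewalRz R z) := by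
      have h1 := huz z hz'.le hz1
      change ((1 - z)⁻¹ • (1 - renewalRz R z)) * _ = 1 at h1
      rw [smul_mul_assoc, ← mul_smul_comm] at h1
      obtain ⟨v, hv⟩ := hinv z hz'.le hz1
      rw [← hv] at h1 ⊢
      rw [Ring.inverse_unit]
      exact Units.eq_inv_of_mul_eq_one_left h1
    rw [← hval]
    exact h
  · refine ((summable_nat_add_iff 1).2 hu).congr fun n => ?_
    dsimp only
    rw [Finset.sum_range_succ _ (n + 1), add_sub_cancel_left]
end

section
/- Under the renewal setup together with the perturbation hypotheses, there exist a neighborhood V of (1,0) in 𝔻̄ × [−α₀,α₀] and functions a : V → ℂ and b : [−α₀,α₀] → ℂ, with a(z,t) → 0 as (z,t) → (1,0) and b(t) → 0 as t → 0, such that for all (z,t) ∈ V, λ(z,t) = 1 + (z − 1)(μ + a(z,t)) − (c + b(t)) M(|t|). -/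
/-! The eigenvalue near `1` is a strictly differentiable function of the operator. Write
`A₀ = R(1)` and `P = φ(·) v` with `φ v = 1`, and let `Q` invert `1 - A₀` on `ker P` and vanish on
`range P`. The operator `1 - A₀ + P` has inverse `Q + P`, so
`w - A + P` is invertible for `(A, w)` near `(A₀, 1)`, and since `w - A` is a rank-one perturbation
of it, `w` is an eigenvalue of `A` as soon as `φ ((w - A + P)⁻¹ v) = 1`. The implicit function
theorem solves this equation by a function `w = g A`, strictly differentiable at `A₀` with
derivative `H ↦ φ (H v)` (`exists_eigenvalue_branch`). Uniqueness of the spectral point in the disk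
of radius `δ` identifies `λ(z,t)` with `g (R(z,t))` near `(1,0)`.

Dominated convergence gives `R(z,t) → R(1)` and, for the difference quotients,
`(R(z,t) - R(1,t)) / (z - 1) = Σ (1 + z + ⋯ + z^{n-1}) R_n(t) → R'(1)`. Strict differentiability
then yields `λ(z,t) - λ(1,t) = (z - 1) (φ (R'(1) v) + o(1)) = (z - 1) (μ + o(1))`, and the assumed
expansion of `λ(1,t)` finishes the proof. -/

open MeasureTheory Filter Topology

/-- `R(z,t) = Σ_{n} R_n(t) zⁿ`. -/
noncomputable def renewalRzt {L : Type*} [NormedAddCommGroup L] [NormedSpace ℂ L]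
    (Rt : ℝ → ℕ → L →L[ℂ] L) (z : ℂ) (t : ℝ) : L →L[ℂ] L := ∑' n : ℕ, z ^ n • Rt t n

open Asymptotics

/-- A rank-one continuous projection has the form `x ↦ φ x • v` with `φ v = 1`. -/
lemma exists_rank_one_form {L : Type*} [NormedAddCommGroup L] [NormedSpace ℂ L]
    (P : L →L[ℂ] L) (hPproj : P * P = P)
    (hPrank : Module.finrank ℂ (LinearMap.range (P : L →ₗ[ℂ] L)) = 1) :
    ∃ (v : L) (φ : L →L[ℂ] ℂ), φ v = 1 ∧ ∀ x, P x = φ x • v := by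
  obtain ⟨⟨v, y, hy⟩, hv0, hspan⟩ := finrank_eq_one_iff'.1 hPrank
  have hv0 : v ≠ 0 := fun h => hv0 (by ext; exact h)
  have hPv : P v = v := by
    rw [← hy]; exact congrArg (fun T : L →L[ℂ] L => T y) hPproj
  obtain ⟨ψ, hψ⟩ := SeparatingDual.exists_eq_one (R := ℂ) hv0
  refine ⟨v, ψ ∘L P, by simp [hPv, hψ], fun x => ?_⟩
  obtain ⟨k, hk⟩ := hspan ⟨P x, x, rfl⟩
  have hk : k • v = P x := congrArg Subtype.val hk
  simp [← hk, hψ]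

/-- Perturbation of a simple isolated eigenvalue `1` of `A₀`: operators near `A₀` have a spectral
value `g A` near `1`, with first-order variation `φ (H v)` in the direction `H`. -/
lemma exists_eigenvalue_branch {L : Type*} [NormedAddCommGroup L] [NormedSpace ℂ L]
    [CompleteSpace L] (A₀ P Q : L →L[ℂ] L) (v : L) (φ : L →L[ℂ] ℂ)
    (hφv : φ v = 1) (hP : ∀ x, P x = φ x • v)
    (hPproj : P * P = P) (hPA : P * A₀ = P) (hAP : A₀ * P = P)
    (hQ1 : Q * (1 - A₀) = 1 - P) (hQ2 : (1 - A₀) * Q = 1 - P)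
    (hQP : Q * P = 0) (hPQ : P * Q = 0) :
    ∃ g : (L →L[ℂ] L) → ℂ,
      HasStrictFDerivAt g (φ ∘L ContinuousLinearMap.apply ℂ L v) A₀ ∧ g A₀ = 1 ∧
      ∀ᶠ A in 𝓝 A₀, g A ∈ spectrum ℂ A := by
  have hPv : P v = v := by rw [hP, hφv, one_smul]
  have hv0 : v ≠ 0 := by rintro rfl; simp at hφv
  have hQv : Q v = 0 := by
    rw [← hPv]; exact congrArg (fun T : L →L[ℂ] L => T v) hQP
  have hφQ : ∀ x, φ (Q x) = 0 := fun x => by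
    have h : P (Q x) = 0 := congrArg (fun T : L →L[ℂ] L => T x) hPQ
    rw [hP] at h
    exact (smul_eq_zero.1 h).resolve_right hv0
  have hφP : ∀ x, φ (P x) = φ x := fun x => by rw [hP]; simp [hφv]
  let u : (L →L[ℂ] L)ˣ :=
    { val := 1 - A₀ + P
      inv := Q + P
      val_inv := by
        rw [add_mul, mul_add, mul_add, hQ2, sub_mul, hAP, hPQ, hPproj]; simp
      inv_val := by
        rw [add_mul, mul_add, mul_add, hQ1, mul_sub P, hPA, hQP, hPproj]; simp }
  have huinv : ((u⁻¹ : (L →L[ℂ] L)ˣ) : L →L[ℂ] L) = Q + P := rfl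
  have huval : (u : L →L[ℂ] L) = 1 - A₀ + P := rfl
  let B : (L →L[ℂ] L) × ℂ → L →L[ℂ] L := fun p => p.2 • 1 - p.1 + P
  have hB0 : B (A₀, 1) = u := by simp [B, huval]
  have hB : HasStrictFDerivAt B
      ((ContinuousLinearMap.snd ℂ (L →L[ℂ] L) ℂ).smulRight (1 : L →L[ℂ] L)
        - ContinuousLinearMap.fst ℂ (L →L[ℂ] L) ℂ) (A₀, 1) :=
    (((hasStrictFDerivAt_snd).smul_const (1 : L →L[ℂ] L)).sub hasStrictFDerivAt_fst).add_const P
  let F : (L →L[ℂ] L) × ℂ → ℂ := fun p => φ (Ring.inverse (B p) v)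
  let F' : (L →L[ℂ] L) × ℂ →L[ℂ] ℂ :=
    φ ∘L ContinuousLinearMap.apply ℂ L v ∘L ContinuousLinearMap.fst ℂ (L →L[ℂ] L) ℂ
      - ContinuousLinearMap.snd ℂ (L →L[ℂ] L) ℂ
  have hF : HasStrictFDerivAt F F' (A₀, 1) := by
    have h1 : HasStrictFDerivAt (Ring.inverse : (L →L[ℂ] L) → _) _ (B (A₀, 1)) :=
      hB0 ▸ hasStrictFDerivAt_ringInverse (𝕜 := ℂ) u
    have h2 := (φ ∘L ContinuousLinearMap.apply ℂ L v).hasStrictFDerivAt.comp (A₀, (1 : ℂ))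
      (h1.comp (A₀, (1 : ℂ)) hB)
    refine h2.congr_fderiv ?_
    ext x <;> simp [F', huinv, hQv, hPv, hφQ, hφP, hφv]
  have hF0 : F (A₀, 1) = 1 := by
    simp [F, hB0, Ring.inverse_unit, huinv, hQv, hPv, hφv]
  have hinr : F' ∘L ContinuousLinearMap.inr ℂ (L →L[ℂ] L) ℂ
      = ((ContinuousLinearEquiv.neg ℂ : ℂ ≃L[ℂ] ℂ) : ℂ →L[ℂ] ℂ) := by
    ext; simp [F']
  have hI : (F' ∘L ContinuousLinearMap.inr ℂ (L →L[ℂ] L) ℂ).IsInvertible := ⟨_, hinr.symm⟩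
  refine ⟨hF.implicitFunctionOfProdDomain hI, ?_, ?_, ?_⟩
  · refine (hF.hasStrictFDerivAt_implicitFunctionOfProdDomain hI).congr_fderiv ?_
    rw [hinr, ContinuousLinearMap.inverse_equiv]
    ext; simp [F']
  · exact (hF.eventually_apply_eq_iff_implicitFunctionOfProdDomain hI).self_of_nhds.mp rfl
  · have hcont := hF.tendsto_implicitFunctionOfProdDomain hI
    have hunit : ∀ᶠ p in 𝓝 (A₀, (1 : ℂ)), IsUnit (B p) :=
      hB.continuousAt.eventually_mem
        (Units.isOpen.mem_nhds (by rw [hB0]; exact u.isUnit))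
    filter_upwards [hF.eventually_apply_implicitFunctionOfProdDomain hI,
      (tendsto_id.prodMk_nhds hcont).eventually hunit] with A hA hu
    set w := hF.implicitFunctionOfProdDomain hI A
    rw [hF0] at hA
    -- `x = (w - A + P)⁻¹ v` is an eigenvector: `(w - A) x = v - φ(x) v = 0`.
    set x := Ring.inverse (B (A, w)) v with hx
    have hφx : φ x = 1 := hA
    have hBx : B (A, w) x = v :=
      congrArg (fun T : L →L[ℂ] L => T v) (Ring.mul_inverse_cancel _ hu)
    have hker : (algebraMap ℂ (L →L[ℂ] L) w - A) x = 0 := by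
      have : w • x - A x + P x = v := hBx
      rw [hP, hφx, one_smul, add_eq_right] at this
      simpa [Algebra.algebraMap_eq_smul_one] using this
    rw [spectrum.mem_iff]
    rintro ⟨T, hT⟩
    have hx0 : x = 0 := by
      have h : ((T⁻¹ : (L →L[ℂ] L)ˣ) : L →L[ℂ] L) ((T : L →L[ℂ] L) x) = x :=
        congrArg (fun T : L →L[ℂ] L => T x) T.inv_mul
      rw [← h, hT, hker, map_zero]
    simp [hx0] at hφx

/-- The difference quotient of `z ↦ R(z,t)` between `1` and `z`, in the form
`Σ (1 + z + ⋯ + z^{n-1}) R_n(t)`, which is also meaningful at `z = 1`. -/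
noncomputable def renewalQuot {L : Type*} [NormedAddCommGroup L] [NormedSpace ℂ L]
    (Rt : ℝ → ℕ → L →L[ℂ] L) (z : ℂ) (t : ℝ) : L →L[ℂ] L :=
  ∑' n : ℕ, (∑ i ∈ Finset.range n, z ^ i) • Rt t n

section Perturbation

variable {L : Type*} [NormedAddCommGroup L] [NormedSpace ℂ L]
  {R : ℕ → L →L[ℂ] L} {α₀ : ℝ} {Rt : ℝ → ℕ → L →L[ℂ] L} {C : ℝ} {r : ℕ → ℝ}

/-- The factor `n` on the right is harmless because the `n = 0` term vanishes. -/
lemma norm_pow_smul_le (hRt00 : ∀ t, Rt t 0 = 0)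
    (hrt : ∀ t ∈ Set.Icc (-α₀) α₀, ∀ n, ‖Rt t n‖ ≤ C * r n)
    {z : ℂ} (hz : ‖z‖ ≤ 1) {t : ℝ} (ht : t ∈ Set.Icc (-α₀) α₀) (n : ℕ) :
    ‖z ^ n • Rt t n‖ ≤ C * (n * r n) := by
  rcases Nat.eq_zero_or_pos n with rfl | hn
  · simp [hRt00]
  have h1 : (1 : ℝ) ≤ n := by exact_mod_cast hn
  have h0 : 0 ≤ C * r n := (norm_nonneg _).trans (hrt t ht n)
  calc ‖z ^ n • Rt t n‖ ≤ 1 * ‖Rt t n‖ := by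
        rw [norm_smul, norm_pow]
        gcongr
        exact pow_le_one₀ (norm_nonneg _) hz
    _ ≤ n * (C * r n) := mul_le_mul h1 (hrt t ht n) (norm_nonneg _) (by positivity)
    _ = C * (n * r n) := by ring

lemma norm_geom_smul_le
    (hrt : ∀ t ∈ Set.Icc (-α₀) α₀, ∀ n, ‖Rt t n‖ ≤ C * r n)
    {z : ℂ} (hz : ‖z‖ ≤ 1) {t : ℝ} (ht : t ∈ Set.Icc (-α₀) α₀) (n : ℕ) :
    ‖(∑ i ∈ Finset.range n, z ^ i) • Rt t n‖ ≤ C * (n * r n) := by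
  have h1 : ‖∑ i ∈ Finset.range n, z ^ i‖ ≤ n := by
    refine (norm_sum_le_of_le _ (f := fun i => z ^ i) (n := fun _ => (1 : ℝ))
      fun i _ => ?_).trans (by simp)
    rw [norm_pow]; exact pow_le_one₀ (norm_nonneg _) hz
  calc ‖(∑ i ∈ Finset.range n, z ^ i) • Rt t n‖ ≤ n * (C * r n) := by
        rw [norm_smul]
        exact mul_le_mul h1 (hrt t ht n) (norm_nonneg _) (by positivity)
    _ = C * (n * r n) := by ring

lemma sub_eq_smul_renewalQuot [CompleteSpace L] (hRt00 : ∀ t, Rt t 0 = 0)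
    (hrt : ∀ t ∈ Set.Icc (-α₀) α₀, ∀ n, ‖Rt t n‖ ≤ C * r n)
    (hrsum : Summable fun n : ℕ => (n : ℝ) * r n)
    {z : ℂ} (hz : ‖z‖ ≤ 1) {t : ℝ} (ht : t ∈ Set.Icc (-α₀) α₀) :
    renewalRzt Rt z t - renewalRzt Rt 1 t = (z - 1) • renewalQuot Rt z t := by
  have hs : ∀ y : ℂ, ‖y‖ ≤ 1 → Summable fun n => y ^ n • Rt t n := fun y hy =>
    Summable.of_norm_bounded (hrsum.mul_left C) (norm_pow_smul_le hRt00 hrt hy ht)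
  have hq : Summable fun n => (∑ i ∈ Finset.range n, z ^ i) • Rt t n :=
    Summable.of_norm_bounded (hrsum.mul_left C) (norm_geom_smul_le hrt hz ht)
  unfold renewalRzt renewalQuot
  rw [← (hs z hz).tsum_sub (hs 1 (by simp)), ← hq.tsum_const_smul]
  refine tsum_congr fun n => ?_
  rw [smul_smul, mul_geom_sum, sub_smul, one_pow]

lemma tendsto_renewalRzt [CompleteSpace L] (hRt00 : ∀ t, Rt t 0 = 0)
    (hRtcont : ∀ n, Tendsto (fun t => Rt t n) (𝓝 0) (𝓝 (R n)))
    (hrt : ∀ t ∈ Set.Icc (-α₀) α₀, ∀ n, ‖Rt t n‖ ≤ C * r n)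
    (hrsum : Summable fun n : ℕ => (n : ℝ) * r n) :
    Tendsto (fun p : ℂ × ℝ => renewalRzt Rt p.1 p.2)
      (𝓝[Metric.closedBall 0 1 ×ˢ Set.Icc (-α₀) α₀] ((1 : ℂ), (0 : ℝ)))
      (𝓝 (renewalRz R 1)) := by
  refine tendsto_tsum_of_dominated_convergence (hrsum.mul_left C) (fun n => ?_) ?_
  · refine Tendsto.mono_left ?_ nhdsWithin_le_nhds
    exact ((continuous_fst.pow n).tendsto ((1 : ℂ), (0 : ℝ))).smul
      ((hRtcont n).comp (continuous_snd.tendsto ((1 : ℂ), (0 : ℝ))))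
  · filter_upwards [self_mem_nhdsWithin] with p hp
    exact norm_pow_smul_le hRt00 hrt (by simpa using hp.1) hp.2

lemma tendsto_renewalQuot [CompleteSpace L]
    (hRtcont : ∀ n, Tendsto (fun t => Rt t n) (𝓝 0) (𝓝 (R n)))
    (hrt : ∀ t ∈ Set.Icc (-α₀) α₀, ∀ n, ‖Rt t n‖ ≤ C * r n)
    (hrsum : Summable fun n : ℕ => (n : ℝ) * r n) :
    Tendsto (fun p : ℂ × ℝ => renewalQuot Rt p.1 p.2)
      (𝓝[Metric.closedBall 0 1 ×ˢ Set.Icc (-α₀) α₀] ((1 : ℂ), (0 : ℝ)))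
      (𝓝 (∑' n : ℕ, (n : ℂ) • R n)) := by
  refine tendsto_tsum_of_dominated_convergence (hrsum.mul_left C) (fun n => ?_) ?_
  · refine Tendsto.mono_left ?_ nhdsWithin_le_nhds
    have h : Continuous fun p : ℂ × ℝ => ∑ i ∈ Finset.range n, p.1 ^ i := by fun_prop
    have h1 := h.tendsto ((1 : ℂ), (0 : ℝ))
    simp only [one_pow, Finset.sum_const, Finset.card_range, nsmul_eq_mul, mul_one] at h1
    exact h1.smul ((hRtcont n).comp (continuous_snd.tendsto ((1 : ℂ), (0 : ℝ))))
  · filter_upwards [self_mem_nhdsWithin] with p hp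
    exact norm_geom_smul_le hrt (by simpa using hp.1) hp.2

end Perturbation

/-- Under the renewal setup together with the perturbation hypotheses, in a neighborhood of
`(1,0)` one can write `λ(z,t) = 1 + (z-1)(μ + a(z,t)) - (c + b(t)) M(|t|)` with `a → 0` at
`(1,0)` and `b → 0` at `0`. -/
theorem renewal_eigenvalue_expansion {L : Type*} [NormedAddCommGroup L] [NormedSpace ℂ L]
    [CompleteSpace L]
    (R : ℕ → L →L[ℂ] L) (hR0 : R 0 = 0)
    (hRsum : Summable fun n : ℕ => (n : ℝ) * ‖R n‖)
    (P : L →L[ℂ] L) (hPne : P ≠ 0) (hPproj : P * P = P)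
    (hPrank : Module.finrank ℂ (LinearMap.range (P : L →ₗ[ℂ] L)) = 1)
    (hPR : P * renewalRz R 1 = P) (hRP : renewalRz R 1 * P = P)
    (hker : ∃ Q : L →L[ℂ] L, Q * (1 - renewalRz R 1) = 1 - P ∧
      (1 - renewalRz R 1) * Q = 1 - P ∧ Q * P = 0 ∧ P * Q = 0)
    (hinv : ∀ z : ℂ, ‖z‖ ≤ 1 → z ≠ 1 → IsUnit (1 - renewalRz R z))
    (μ : ℝ) (hμpos : 0 < μ)
    (hPRP : P * (∑' n : ℕ, (n : ℂ) • R n) * P = (μ : ℂ) • P)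
    -- perturbation hypotheses
    (α₀ : ℝ) (hα₀ : 0 < α₀)
    (Rt : ℝ → ℕ → L →L[ℂ] L) (hRt0 : Rt 0 = R) (hRt00 : ∀ t, Rt t 0 = 0)
    (hRtcont : ∀ n, Tendsto (fun t => Rt t n) (𝓝 0) (𝓝 (R n)))
    (C : ℝ) (hC : 0 < C) (r : ℕ → ℝ) (hrR : ∀ n, ‖R n‖ ≤ r n)
    (hrt : ∀ t ∈ Set.Icc (-α₀) α₀, ∀ n, ‖Rt t n‖ ≤ C * r n)
    (hrsum : Summable fun n : ℕ => (n : ℝ) * r n)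
    (Mf : ℝ → ℝ) (hMcont : ContinuousOn Mf (Set.Ici 0))
    (hMzero : ∀ s ∈ Set.Ici (0:ℝ), (Mf s = 0 ↔ s = 0))
    (hMnonneg : ∀ s ∈ Set.Ici (0:ℝ), 0 ≤ Mf s)
    (c : ℂ) (hc : 0 < c.re)
    (lam : ℂ → ℝ → ℂ) (δ : ℝ) (hδ : 0 < δ) (U : Set (ℂ × ℝ))
    (hU : U ∈ nhdsWithin ((1:ℂ), (0:ℝ)) (Metric.closedBall 0 1 ×ˢ Set.Icc (-α₀) α₀))
    (hUsub : U ⊆ Metric.closedBall 0 1 ×ˢ Set.Icc (-α₀) α₀)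
    (hspec : ∀ p ∈ U,
      spectrum ℂ (renewalRzt Rt p.1 p.2) ∩ Metric.ball (1:ℂ) δ = {lam p.1 p.2})
    (hsimple : ∀ p ∈ U, ∃ Pp : L →L[ℂ] L, Pp ≠ 0 ∧ Pp * Pp = Pp ∧
      Module.finrank ℂ (LinearMap.range (Pp : L →ₗ[ℂ] L)) = 1 ∧
      renewalRzt Rt p.1 p.2 * Pp = Pp * renewalRzt Rt p.1 p.2 ∧
      renewalRzt Rt p.1 p.2 * Pp = lam p.1 p.2 • Pp)
    (hlam1 : ∃ b : ℝ → ℂ, Tendsto b (𝓝 0) (𝓝 0) ∧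
      ∀ᶠ t in 𝓝 (0:ℝ), lam 1 t = 1 - (c + b t) * ((Mf |t| : ℝ) : ℂ)) :
    ∃ V ∈ nhdsWithin ((1:ℂ), (0:ℝ)) (Metric.closedBall 0 1 ×ˢ Set.Icc (-α₀) α₀),
      ∃ a : ℂ × ℝ → ℂ, ∃ b : ℝ → ℂ,
        Tendsto a (nhdsWithin ((1:ℂ), (0:ℝ)) (Metric.closedBall 0 1 ×ˢ Set.Icc (-α₀) α₀))
          (𝓝 0) ∧
        Tendsto b (𝓝 0) (𝓝 0) ∧
        ∀ p ∈ V ∩ (Metric.closedBall 0 1 ×ˢ Set.Icc (-α₀) α₀),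
          lam p.1 p.2 = 1 + (p.1 - 1) * ((μ : ℂ) + a p)
            - (c + b p.2) * ((Mf |p.2| : ℝ) : ℂ) := by
  obtain ⟨Q, hQ1, hQ2, hQP, hPQ⟩ := hker
  obtain ⟨v, φ, hφv, hP⟩ := exists_rank_one_form P hPproj hPrank
  obtain ⟨g, hg, hg1, hgspec⟩ := exists_eigenvalue_branch (renewalRz R 1) P Q v φ hφv hP
    hPproj hPR hRP hQ1 hQ2 hQP hPQ
  have hv0 : v ≠ 0 := by rintro rfl; simp at hφv
  set D := ∑' n : ℕ, (n : ℂ) • R n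
  have hμ : φ (D v) = μ := by
    have h : P (D (P v)) = (μ : ℂ) • P v := congrArg (fun T : L →L[ℂ] L => T v) hPRP
    rw [hP v, hφv, one_smul, hP] at h
    exact smul_left_injective ℂ hv0 h
  set S : Set (ℂ × ℝ) := Metric.closedBall 0 1 ×ˢ Set.Icc (-α₀) α₀ with hS
  set l := 𝓝[S] ((1 : ℂ), (0 : ℝ)) with hl
  have hA := tendsto_renewalRzt hRt00 hRtcont hrt hrsum
  have hDq := tendsto_renewalQuot hRtcont hrt hrsum
  -- Statements near `(1,0)` transfer from `(z,t)` to `(1,t)`.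
  have hproj : Tendsto (fun p : ℂ × ℝ => ((1 : ℂ), p.2)) l l := by
    refine tendsto_nhdsWithin_iff.2 ⟨?_, ?_⟩
    · have hc : Continuous fun p : ℂ × ℝ => ((1 : ℂ), p.2) := by fun_prop
      exact (hc.tendsto ((1 : ℂ), (0 : ℝ))).mono_left nhdsWithin_le_nhds
    · filter_upwards [self_mem_nhdsWithin] with p hp
      exact ⟨by simp, hp.2⟩
  have hA1 : Tendsto (fun p : ℂ × ℝ => renewalRzt Rt 1 p.2) l (𝓝 (renewalRz R 1)) :=
    hA.comp hproj
  have hlamg : ∀ᶠ p in l, lam p.1 p.2 = g (renewalRzt Rt p.1 p.2) := by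
    have hball : ∀ᶠ A in 𝓝 (renewalRz R 1), g A ∈ Metric.ball (1 : ℂ) δ :=
      hg.continuousAt.eventually_mem (by rw [hg1]; exact Metric.ball_mem_nhds _ hδ)
    filter_upwards [hU, hA.eventually hgspec, hA.eventually hball] with p hp h1 h2
    have h3 : g (renewalRzt Rt p.1 p.2) ∈ ({lam p.1 p.2} : Set ℂ) := hspec p hp ▸ ⟨h1, h2⟩
    exact (Set.mem_singleton_iff.1 h3).symm
  have hlamg1 : ∀ᶠ p in l, lam 1 p.2 = g (renewalRzt Rt 1 p.2) := hproj.eventually hlamg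
  have hquot : ∀ᶠ p in l, renewalRzt Rt p.1 p.2 - renewalRzt Rt 1 p.2
      = (p.1 - 1) • renewalQuot Rt p.1 p.2 := by
    filter_upwards [self_mem_nhdsWithin] with p hp
    exact sub_eq_smul_renewalQuot hRt00 hrt hrsum (by simpa using hp.1) hp.2
  have hsub : (fun p : ℂ × ℝ => renewalRzt Rt p.1 p.2 - renewalRzt Rt 1 p.2)
      =O[l] fun p => p.1 - 1 := by
    have h := (isBigO_refl (fun p : ℂ × ℝ => p.1 - 1) l).smul (hDq.isBigO_one ℂ)
    refine h.congr' (hquot.mono fun p hp => hp.symm) (Eventually.of_forall fun p => by simp)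
  have herr := (hg.isLittleO.comp_tendsto (hA.prodMk_nhds hA1)).trans_isBigO hsub
  have hlin : (fun p : ℂ × ℝ => (p.1 - 1) * (φ (renewalQuot Rt p.1 p.2 v) - μ))
      =o[l] fun p => p.1 - 1 := by
    have h0 : Tendsto (fun p : ℂ × ℝ => φ (renewalQuot Rt p.1 p.2 v) - μ) l (𝓝 0) := by
      have := ((φ ∘L ContinuousLinearMap.apply ℂ L v).continuous.tendsto D).comp hDq
      have h2 := this.sub_const (μ : ℂ)
      simpa [hμ, Function.comp_def] using h2
    have h := (isBigO_refl (fun p : ℂ × ℝ => p.1 - 1) l).mul_isLittleO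
      ((isLittleO_one_iff ℂ).2 h0)
    simpa using h
  have hmain : (fun p : ℂ × ℝ => lam p.1 p.2 - lam 1 p.2 - (p.1 - 1) * μ)
      =o[l] fun p => p.1 - 1 := by
    refine (herr.add hlin).congr' ?_ EventuallyEq.rfl
    filter_upwards [hlamg, hlamg1, hquot] with p h1 h2 h3
    simp only [Function.comp_apply, h1, h2, h3]
    simp
    ring
  obtain ⟨b, hb, hbeq⟩ := hlam1
  have hbl : ∀ᶠ p : ℂ × ℝ in l, lam 1 p.2 = 1 - (c + b p.2) * ((Mf |p.2| : ℝ) : ℂ) :=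
    ((continuous_snd.tendsto ((1 : ℂ), (0 : ℝ))).mono_left nhdsWithin_le_nhds).eventually hbeq
  -- At `z = 1` the quotient defining `a` is `0 / 0 = 0`.
  refine ⟨_, hbl, fun p => (lam p.1 p.2 - lam 1 p.2 - (p.1 - 1) * μ) / (p.1 - 1), b,
    hmain.tendsto_div_nhds_zero, hb, ?_⟩
  rintro ⟨z, t⟩ ⟨hV, -⟩
  have hp : lam 1 t = 1 - (c + b t) * ((Mf |t| : ℝ) : ℂ) := hV
  by_cases hz : z = 1
  · subst hz; simp [hp]
  · have hz' : z - 1 ≠ 0 := sub_ne_zero.2 hz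
    simp only [mul_add, mul_div_cancel₀ _ hz', hp]
    ring
end

section
/- Under the renewal setup together with the perturbation hypotheses, there exists ε₀ > 0 such that for every pair (z,t) ∈ 𝔻̄ × [−ε₀, ε₀] with (z,t) ≠ (1,0), the operator I − R(z,t) is invertible. -/
/-!
Write `R(z,t)` for `renewalRzt Rt z t`. Invertibility is an open condition and `(z,t) ↦ R(z,t)` is
continuous at every `(z₀,0)` by dominated convergence, so near `(z₀,0)` with `z₀ ≠ 1` it follows
from the invertibility of `I - R(z₀)`. Compactness of the closed disk reduces the claim to a
neighbourhood of `(1,0)`.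

There the operator `B(z,t) = I - R(z,t) + P` is invertible, since `B(1,0)` has inverse `Q + P`.
Writing `P x = φ(x) v` with `φ(v) = 1`, the rank-one perturbation `I - R(z,t) = B(z,t) - P` is
invertible as soon as `d(z,t) = 1 - φ(B(z,t)⁻¹ v)` is nonzero (`isUnit_sub_rankOne`). Two resolvent
identities expand `d` near `(1,0)`:

* `d(1,t) = (1 - λ(1,t)) (1 + o(1)) = (c + o(1)) M(|t|)`, by comparing `B` with `B - (1 - λ(1,t))`
  on an eigenvector (`one_sub_eq_of_eigenvector`);
* `d(z,t) - d(1,t) = (1 - z) (μ + o(1))`, because the difference quotients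
  `(R(1,t) - R(z,t)) / (1 - z)` converge to `R'(1)`.

If `d(z,t) = 0`, then `1 - z = -(c/μ + o(1)) M(|t|)`. The left side has nonnegative real part and
the right side nonpositive real part, which forces `M(|t|) = 0`, so `t = 0` and `z = 1`.
-/

open MeasureTheory Filter Topology

/-! ### Rank-one perturbations of an invertible operator -/

section Algebra

variable {L : Type*} [NormedAddCommGroup L] [NormedSpace ℂ L]

/-- A projection with one-dimensional range has the form `x ↦ φ x • v` with `φ v = 1`. -/
lemma exists_rankOne_form (P : L →L[ℂ] L) (hPproj : P * P = P)
    (hPrank : Module.finrank ℂ (LinearMap.range (P : L →ₗ[ℂ] L)) = 1) :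
    ∃ (v : L) (φ : L →L[ℂ] ℂ), φ v = 1 ∧ P v = v ∧ (∀ x, P x = φ x • v) ∧
      ∀ x, φ (P x) = φ x := by
  obtain ⟨v, hv0, hv⟩ := finrank_eq_one_iff'.1 hPrank
  obtain ⟨v, y, hy⟩ := v
  have hPP : ∀ x, P (P x) = P x := fun x => by
    simpa using congrArg (fun T : L →L[ℂ] L => T x) hPproj
  have hv0' : v ≠ 0 := fun h => hv0 (Subtype.ext h)
  obtain ⟨f, hf⟩ := SeparatingDual.exists_eq_one (R := ℂ) hv0'
  have hy' : P y = v := hy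
  have hPv : P v = v := by rw [← hy', hPP]
  refine ⟨v, f ∘L P, by simp [hPv, hf], hPv, fun x => ?_, fun x => by simp [hPP]⟩
  obtain ⟨a, ha⟩ := hv ⟨P x, x, rfl⟩
  have ha' : a • v = P x := congrArg Subtype.val ha
  simp [← ha', hf]

/-- If `1 - φ (B⁻¹ v) ≠ 0`, then the rank-one perturbation `B - P` of `B` is invertible. -/
lemma isUnit_sub_rankOne (B P : L →L[ℂ] L) (v : L) (φ : L →L[ℂ] ℂ) (hP : ∀ x, P x = φ x • v)
    (hB : IsUnit B) (h : φ (Ring.inverse B v) ≠ 1) : IsUnit (B - P) := by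
  set T : L →L[ℂ] L := Ring.inverse B * P with hT
  set a := φ (Ring.inverse B v) with ha
  have hTT : T * T = a • T := by
    ext x
    simp [hT, hP, ha, smul_smul, mul_comm]
  have h1 : (1 - a) ≠ 0 := sub_ne_zero.2 (Ne.symm h)
  have hBP : B - P = B * (1 - T) := by
    rw [hT, mul_sub, ← mul_assoc, Ring.mul_inverse_cancel _ hB, one_mul, mul_one]
  have hk : (1 - a)⁻¹ - 1 - (1 - a)⁻¹ * a = 0 := by field_simp; ring
  have hz : (1 - a)⁻¹ • T - T - ((1 - a)⁻¹ * a) • T = 0 := by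
    rw [← zero_smul ℂ T, ← hk, sub_smul, sub_smul, one_smul]
  have hl : (1 - T) * (1 + (1 - a)⁻¹ • T) = 1 := by
    rw [sub_mul, mul_add, mul_add, mul_smul_comm, mul_smul_comm, hTT, smul_smul]
    rw [← sub_eq_zero, ← hz]
    simp only [one_mul, mul_one]
    abel
  have hr : (1 + (1 - a)⁻¹ • T) * (1 - T) = 1 := by
    rw [mul_sub, add_mul, add_mul, smul_mul_assoc, smul_mul_assoc, hTT, smul_smul]
    rw [← sub_eq_zero, ← hz]
    simp only [one_mul, mul_one]
    abel
  rw [hBP]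
  exact hB.mul ⟨⟨_, _, hl, hr⟩, rfl⟩

/-- If `s` is an eigenvalue of `B - P`, the number `1 - φ (B⁻¹ v)` is computed from `s` by the
resolvent identity for `B - s` and `B`. -/
lemma one_sub_eq_of_eigenvector (B P : L →L[ℂ] L) (v : L) (φ : L →L[ℂ] ℂ)
    (hP : ∀ x, P x = φ x • v) (s : ℂ) (hB : IsUnit B) (hBs : IsUnit (B - s • 1))
    (w : L) (hw : w ≠ 0) (hBw : (B - P) w = s • w) :
    1 - φ (Ring.inverse B v) =
      s * φ ((Ring.inverse (B - s • 1) * Ring.inverse B) v) := by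
  set D := Ring.inverse (B - s • 1) with hD
  have h1 : (B - s • 1) w = φ w • v := by
    rw [← hP]
    simp only [sub_apply, smul_apply,
      one_apply_eq_self] at hBw ⊢
    rw [← hBw]; abel
  have hw2 : w = φ w • D v := by
    have : (D * (B - s • 1)) w = w := by rw [hD, Ring.inverse_mul_cancel _ hBs]; rfl
    rw [mul_apply_eq_comp, h1, map_smul] at this
    exact this.symm
  have hφw : φ w ≠ 0 := fun h => hw (by rw [hw2, h, zero_smul])
  have hDv : φ (D v) = 1 := by
    have := congrArg φ hw2
    rw [map_smul, smul_eq_mul] at this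
    exact mul_left_cancel₀ hφw (by rw [← this, mul_one])
  have hres : D - Ring.inverse B = s • (D * Ring.inverse B) := by
    have e1 : D * (B - (B - s • 1)) * Ring.inverse B = D - Ring.inverse B := by
      rw [mul_sub, hD, Ring.inverse_mul_cancel _ hBs, sub_mul, mul_assoc,
        Ring.mul_inverse_cancel _ hB, mul_one, one_mul]
    rw [← e1, sub_sub_cancel, mul_smul_comm, mul_one, smul_mul_assoc]
  have := congrArg (fun T : L →L[ℂ] L => φ (T v)) hres
  simpa [hDv] using this

end Algebra

/-! ### Joint continuity of the renewal series and of its difference quotients -/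

section Continuity

variable {L : Type*} [NormedAddCommGroup L] [NormedSpace ℂ L] [CompleteSpace L]

/-- `Σ R_n(t) (1 + z + ⋯ + z^(n-1))`, which is the difference quotient
`(R(1,t) - R(z,t)) / (1 - z)` for `z ≠ 1` and the derivative `R'(1,t)` for `z = 1`. -/
noncomputable def renewalSlope (Rt : ℝ → ℕ → L →L[ℂ] L) (z : ℂ) (t : ℝ) : L →L[ℂ] L :=
  ∑' n : ℕ, (∑ i ∈ Finset.range n, z ^ i) • Rt t n

lemma summable_of_summable_nat_mul {r : ℕ → ℝ} (h0 : ∀ n, 0 ≤ r n)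
    (h : Summable fun n : ℕ => (n : ℝ) * r n) : Summable r := by
  rw [← summable_nat_add_iff 1] at h ⊢
  refine Summable.of_nonneg_of_le (fun n => h0 _) (fun n => ?_) h
  have := h0 (n + 1)
  push_cast
  nlinarith [n.cast_nonneg (α := ℝ)]

lemma norm_geom_le {z : ℂ} (hz : ‖z‖ ≤ 1) (n : ℕ) : ‖∑ i ∈ Finset.range n, z ^ i‖ ≤ n := by
  refine (norm_sum_le _ _).trans ?_
  calc ∑ i ∈ Finset.range n, ‖z ^ i‖ ≤ ∑ i ∈ Finset.range n, (1 : ℝ) :=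
        Finset.sum_le_sum fun i _ => by rw [norm_pow]; exact pow_le_one₀ (norm_nonneg _) hz
    _ = n := by simp

variable (Rt : ℝ → ℕ → L →L[ℂ] L) (α₀ C : ℝ) (r : ℕ → ℝ)

/-- Dominated convergence for series `Σ g_n(z) R_n(t)` as `(z,t) → (z₀,0)`. -/
lemma tendsto_weighted_tsum (hRtcont : ∀ n, Tendsto (fun t => Rt t n) (𝓝 0) (𝓝 (Rt 0 n)))
    (hrt : ∀ t ∈ Set.Icc (-α₀) α₀, ∀ n, ‖Rt t n‖ ≤ C * r n)
    (g : ℕ → ℂ → ℂ) (hg : ∀ n, Continuous (g n)) (w : ℕ → ℝ) (hw : ∀ n, 0 ≤ w n)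
    (hgw : ∀ n z, ‖z‖ ≤ 1 → ‖g n z‖ ≤ w n) (hsum : Summable fun n => w n * r n) (z₀ : ℂ) :
    Tendsto (fun p : ℂ × ℝ => ∑' n, g n p.1 • Rt p.2 n)
      (𝓝[Metric.closedBall 0 1 ×ˢ Set.Icc (-α₀) α₀] (z₀, 0))
      (𝓝 (∑' n, g n z₀ • Rt 0 n)) := by
  refine tendsto_tsum_of_dominated_convergence (bound := fun n => C * (w n * r n))
    (hsum.mul_left C) (fun n => ?_) ?_
  · have h1 : Tendsto (fun p : ℂ × ℝ => g n p.1) (𝓝 (z₀, 0)) (𝓝 (g n z₀)) :=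
      ((hg n).comp continuous_fst).tendsto (z₀, (0 : ℝ))
    have h2 : Tendsto (fun p : ℂ × ℝ => Rt p.2 n) (𝓝 (z₀, 0)) (𝓝 (Rt 0 n)) :=
      (hRtcont n).comp (continuous_snd.tendsto (z₀, (0 : ℝ)))
    exact (h1.smul h2).mono_left nhdsWithin_le_nhds
  · filter_upwards [self_mem_nhdsWithin] with p hp n
    have h1 := hgw n p.1 (by simpa using hp.1)
    have h2 := hrt p.2 hp.2 n
    calc ‖g n p.1 • Rt p.2 n‖ ≤ w n * (C * r n) := by
          rw [norm_smul]; exact mul_le_mul h1 h2 (norm_nonneg _) (hw n)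
      _ = C * (w n * r n) := by ring

lemma renewal_sub_eq_slope (hrt : ∀ t ∈ Set.Icc (-α₀) α₀, ∀ n, ‖Rt t n‖ ≤ C * r n)
    (hr : Summable r) (hrsum : Summable fun n : ℕ => (n : ℝ) * r n)
    {z : ℂ} (hz : ‖z‖ ≤ 1) {t : ℝ} (ht : t ∈ Set.Icc (-α₀) α₀) :
    renewalRzt Rt 1 t - renewalRzt Rt z t = (1 - z) • renewalSlope Rt z t := by
  have hs : ∀ y : ℂ, ‖y‖ ≤ 1 → Summable fun n : ℕ => y ^ n • Rt t n := fun y hy => by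
    refine Summable.of_norm_bounded (hr.mul_left C) fun n => ?_
    rw [norm_smul, norm_pow]
    exact (mul_le_of_le_one_left (norm_nonneg _) (pow_le_one₀ (norm_nonneg _) hy)).trans
      (hrt t ht n)
  have hS : Summable fun n : ℕ => (∑ i ∈ Finset.range n, z ^ i) • Rt t n := by
    refine Summable.of_norm_bounded (hrsum.mul_left C) fun n => ?_
    rw [norm_smul]
    calc _ ≤ (n : ℝ) * (C * r n) :=
          mul_le_mul (norm_geom_le hz n) (hrt t ht n) (norm_nonneg _) n.cast_nonneg
      _ = C * (n * r n) := by ring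
  unfold renewalRzt renewalSlope
  rw [← (hs 1 (by simp)).tsum_sub (hs z hz), ← hS.tsum_const_smul]
  refine tsum_congr fun n => ?_
  rw [← sub_smul, smul_smul, one_pow, mul_neg_geom_sum]

end Continuity

/-! ### Invertibility near the point `(1, 0)` and on the closed disk -/

/-- Under the renewal setup together with the perturbation hypotheses, there is `ε₀ > 0`
such that `I - R(z,t)` is invertible for every `(z,t) ≠ (1,0)` with `‖z‖ ≤ 1`, `|t| ≤ ε₀`. -/
theorem renewal_perturbed_invertibility {L : Type*} [NormedAddCommGroup L] [NormedSpace ℂ L]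
    [CompleteSpace L]
    (R : ℕ → L →L[ℂ] L) (hR0 : R 0 = 0)
    (hRsum : Summable fun n : ℕ => (n : ℝ) * ‖R n‖)
    (P : L →L[ℂ] L) (hPne : P ≠ 0) (hPproj : P * P = P)
    (hPrank : Module.finrank ℂ (LinearMap.range (P : L →ₗ[ℂ] L)) = 1)
    (hPR : P * renewalRz R 1 = P) (hRP : renewalRz R 1 * P = P)
    (hker : ∃ Q : L →L[ℂ] L, Q * (1 - renewalRz R 1) = 1 - P ∧
      (1 - renewalRz R 1) * Q = 1 - P ∧ Q * P = 0 ∧ P * Q = 0)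
    (hinv : ∀ z : ℂ, ‖z‖ ≤ 1 → z ≠ 1 → IsUnit (1 - renewalRz R z))
    (μ : ℝ) (hμpos : 0 < μ)
    (hPRP : P * (∑' n : ℕ, (n : ℂ) • R n) * P = (μ : ℂ) • P)
    -- perturbation hypotheses
    (α₀ : ℝ) (hα₀ : 0 < α₀)
    (Rt : ℝ → ℕ → L →L[ℂ] L) (hRt0 : Rt 0 = R) (hRt00 : ∀ t, Rt t 0 = 0)
    (hRtcont : ∀ n, Tendsto (fun t => Rt t n) (𝓝 0) (𝓝 (R n)))
    (C : ℝ) (hC : 0 < C) (r : ℕ → ℝ) (hrR : ∀ n, ‖R n‖ ≤ r n)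
    (hrt : ∀ t ∈ Set.Icc (-α₀) α₀, ∀ n, ‖Rt t n‖ ≤ C * r n)
    (hrsum : Summable fun n : ℕ => (n : ℝ) * r n)
    (Mf : ℝ → ℝ) (hMcont : ContinuousOn Mf (Set.Ici 0))
    (hMzero : ∀ s ∈ Set.Ici (0:ℝ), (Mf s = 0 ↔ s = 0))
    (hMnonneg : ∀ s ∈ Set.Ici (0:ℝ), 0 ≤ Mf s)
    (c : ℂ) (hc : 0 < c.re)
    (lam : ℂ → ℝ → ℂ) (δ : ℝ) (hδ : 0 < δ) (U : Set (ℂ × ℝ))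
    (hU : U ∈ nhdsWithin ((1:ℂ), (0:ℝ)) (Metric.closedBall 0 1 ×ˢ Set.Icc (-α₀) α₀))
    (hUsub : U ⊆ Metric.closedBall 0 1 ×ˢ Set.Icc (-α₀) α₀)
    (hspec : ∀ p ∈ U,
      spectrum ℂ (renewalRzt Rt p.1 p.2) ∩ Metric.ball (1:ℂ) δ = {lam p.1 p.2})
    (hsimple : ∀ p ∈ U, ∃ Pp : L →L[ℂ] L, Pp ≠ 0 ∧ Pp * Pp = Pp ∧
      Module.finrank ℂ (LinearMap.range (Pp : L →ₗ[ℂ] L)) = 1 ∧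
      renewalRzt Rt p.1 p.2 * Pp = Pp * renewalRzt Rt p.1 p.2 ∧
      renewalRzt Rt p.1 p.2 * Pp = lam p.1 p.2 • Pp)
    (hlam1 : ∃ b : ℝ → ℂ, Tendsto b (𝓝 0) (𝓝 0) ∧
      ∀ᶠ t in 𝓝 (0:ℝ), lam 1 t = 1 - (c + b t) * ((Mf |t| : ℝ) : ℂ)) :
    ∃ ε₀ : ℝ, 0 < ε₀ ∧ ε₀ ≤ α₀ ∧
      ∀ z : ℂ, ∀ t : ℝ, ‖z‖ ≤ 1 → |t| ≤ ε₀ → (z, t) ≠ ((1:ℂ), (0:ℝ)) →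
        IsUnit (1 - renewalRzt Rt z t) := by
  subst hRt0
  have hr0 : ∀ n, 0 ≤ r n := fun n => (norm_nonneg _).trans (hrR n)
  have hr : Summable r := summable_of_summable_nat_mul hr0 hrsum
  have hRz : ∀ z, renewalRz (Rt 0) z = renewalRzt Rt z 0 := fun z => rfl
  simp only [hRz] at hPR hRP hker hinv
  have hcont : ∀ z₀ : ℂ, Tendsto (fun p : ℂ × ℝ => renewalRzt Rt p.1 p.2)
      (𝓝[Metric.closedBall 0 1 ×ˢ Set.Icc (-α₀) α₀] (z₀, 0)) (𝓝 (renewalRzt Rt z₀ 0)) :=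
    tendsto_weighted_tsum Rt α₀ C r hRtcont hrt (fun n z => z ^ n) (fun n => by fun_prop)
      (fun _ => 1) (fun _ => zero_le_one)
      (fun n z hz => by rw [norm_pow]; exact pow_le_one₀ (norm_nonneg _) hz) (by simpa using hr)
  have hslope : Tendsto (fun p : ℂ × ℝ => renewalSlope Rt p.1 p.2)
      (𝓝[Metric.closedBall 0 1 ×ˢ Set.Icc (-α₀) α₀] (1, 0))
      (𝓝 (∑' n : ℕ, (n : ℂ) • Rt 0 n)) := by
    have := tendsto_weighted_tsum Rt α₀ C r hRtcont hrt
      (fun n z => ∑ i ∈ Finset.range n, z ^ i) (fun n => by fun_prop)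
      (fun n => n) (fun n => n.cast_nonneg) (fun n z hz => norm_geom_le hz n) hrsum 1
    simpa [renewalSlope] using this
  have hone : ∀ᶠ p : ℂ × ℝ in 𝓝[Metric.closedBall 0 1 ×ˢ Set.Icc (-α₀) α₀] (1, 0),
      p ≠ (1, 0) → IsUnit (1 - renewalRzt Rt p.1 p.2) := by
    set F := 𝓝[Metric.closedBall 0 1 ×ˢ Set.Icc (-α₀) α₀] ((1 : ℂ), (0 : ℝ)) with hF
    obtain ⟨v, φ, hφv, hPv, hPφ, hφP⟩ := exists_rankOne_form P hPproj hPrank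
    obtain ⟨Q, hQ1, hQ2, hQP, hPQ⟩ := hker
    set N := Q + P with hN
    set B : ℂ × ℝ → L →L[ℂ] L := fun p => 1 - renewalRzt Rt p.1 p.2 + P with hBdef
    set B₀ : L →L[ℂ] L := 1 - renewalRzt Rt 1 0 + P with hB₀
    have hNB : N * B₀ = 1 := by
      rw [hN, hB₀, mul_add, add_mul, add_mul, hQ1, hQP, hPproj, mul_sub, hPR]
      simp
    have hBN : B₀ * N = 1 := by
      rw [hN, hB₀, mul_add, add_mul, add_mul, hQ2, hPQ, hPproj, sub_mul, hRP]
      simp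
    have hB₀u : IsUnit B₀ := ⟨⟨B₀, N, hBN, hNB⟩, rfl⟩
    have hinvB₀ : Ring.inverse B₀ = N := Ring.inverse_unit ⟨B₀, N, hBN, hNB⟩
    have hφN : ∀ x, φ (N x) = φ x := fun x => by
      have h : P (Q x) = 0 := by
        simpa using congrArg (fun T : L →L[ℂ] L => T x) hPQ
      have h2 : φ (Q x) = 0 := by rw [← hφP, h, map_zero]
      simp [hN, h2, hφP]
    have hNv : N v = v := by
      have h : Q (P v) = 0 := by
        simpa using congrArg (fun T : L →L[ℂ] L => T v) hQP
      rw [hPv] at h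
      simp [hN, h, hPv]
    have hBt : Tendsto B F (𝓝 B₀) := (tendsto_const_nhds.sub (hcont 1)).add tendsto_const_nhds
    have hinvt : ContinuousAt Ring.inverse B₀ := NormedRing.inverse_continuousAt hB₀u.unit
    have hevU : ∀ᶠ T in 𝓝 B₀, IsUnit T := Units.isOpen.mem_nhds hB₀u
    -- Composing with `π` turns limits at `(1, 0)` of functions of `(z, t)` into limits of their
    -- restrictions to `z = 1`.
    set π : ℂ × ℝ → ℂ × ℝ := fun p => (1, p.2) with hπ
    have hπt : Tendsto π F F := by
      refine tendsto_nhdsWithin_iff.2 ⟨?_, ?_⟩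
      · have : Continuous π := by fun_prop
        exact (this.tendsto ((1 : ℂ), (0 : ℝ))).mono_left nhdsWithin_le_nhds
      · filter_upwards [self_mem_nhdsWithin] with p hp
        exact ⟨by simp [hπ], hp.2⟩
    have hB1t : Tendsto (fun p => B (π p)) F (𝓝 B₀) := hBt.comp hπt
    have hsnd : Tendsto (fun p : ℂ × ℝ => p.2) F (𝓝 0) :=
      (continuous_snd.tendsto ((1 : ℂ), (0 : ℝ))).mono_left nhdsWithin_le_nhds
    obtain ⟨b, hb, hlam⟩ := hlam1
    have hb' : Tendsto (fun p : ℂ × ℝ => b p.2) F (𝓝 0) := hb.comp hsnd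
    have hMt : Tendsto (fun p : ℂ × ℝ => Mf |p.2|) F (𝓝 0) := by
      have h0 : Tendsto Mf (𝓝[Set.Ici 0] 0) (𝓝 0) := by
        have := hMcont 0 (Set.mem_Ici.2 le_rfl)
        rwa [ContinuousWithinAt, (hMzero 0 (Set.mem_Ici.2 le_rfl)).2 rfl] at this
      refine h0.comp (tendsto_nhdsWithin_iff.2 ⟨?_, .of_forall fun p => Set.mem_Ici.2 (abs_nonneg _)⟩)
      simpa using hsnd.abs
    set s : ℂ × ℝ → ℂ := fun p => (c + b p.2) * ((Mf |p.2| : ℝ) : ℂ) with hs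
    have hst : Tendsto s F (𝓝 0) := by
      have h1 : Tendsto (fun p : ℂ × ℝ => ((Mf |p.2| : ℝ) : ℂ)) F (𝓝 0) := by
        simpa [Function.comp_def] using (Complex.continuous_ofReal.tendsto 0).comp hMt
      simpa using (tendsto_const_nhds.add hb').mul h1
    have hBst : Tendsto (fun p => B (π p) - s p • (1 : L →L[ℂ] L)) F (𝓝 B₀) := by
      simpa using hB1t.sub (hst.smul_const (1 : L →L[ℂ] L))
    have happ : ∀ {T : ℂ × ℝ → L →L[ℂ] L} {T₀ : L →L[ℂ] L}, Tendsto T F (𝓝 T₀) →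
        Tendsto (fun p => φ (T p v)) F (𝓝 (φ (T₀ v))) := fun {T T₀} h => by
      have hc : Continuous fun T : L →L[ℂ] L => φ (T v) := by fun_prop
      exact (hc.tendsto T₀).comp h
    have hinvB := hinvt.tendsto.comp hBt
    have hinvB1 := hinvt.tendsto.comp hB1t
    have hinvBs := hinvt.tendsto.comp hBst
    rw [hinvB₀] at hinvB hinvB1 hinvBs
    -- `d(1,t) = s * e` with `e → 1`, and `d(z,t) - d(1,t) = (1 - z) * m` with `m → μ`.
    set e : ℂ × ℝ → ℂ := fun p =>
      φ ((Ring.inverse (B (π p) - s p • 1) * Ring.inverse (B (π p))) v) with he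
    have het : Tendsto e F (𝓝 1) := by
      have := happ (hinvBs.mul hinvB1)
      simpa [he, hNv, hφv] using this
    set m : ℂ × ℝ → ℂ := fun p =>
      φ ((Ring.inverse (B p) * renewalSlope Rt p.1 p.2 * Ring.inverse (B (π p))) v) with hm
    have hmt : Tendsto m F (𝓝 (μ : ℂ)) := by
      have h1 := happ ((hinvB.mul hslope).mul hinvB1)
      have h2 : φ ((∑' n : ℕ, (n : ℂ) • Rt 0 n) v) = μ := by
        have := congrArg (fun T : L →L[ℂ] L => φ (T v)) hPRP
        simpa [hPv, hφP, hφv] using this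
      simp only [mul_apply_eq_comp, hNv, hφN, h2] at h1
      exact h1
    have hμ0 : (μ : ℂ) ≠ 0 := by exact_mod_cast hμpos.ne'
    have hqt : Tendsto (fun p : ℂ × ℝ => ((c + b p.2) * e p / m p).re) F (𝓝 (c / μ).re) := by
      have h1 : Tendsto (fun p : ℂ × ℝ => (c + b p.2) * e p / m p) F (𝓝 (c / μ)) := by
        simpa [Pi.div_def] using
          ((tendsto_const_nhds.add hb').mul het).div hmt hμ0
      exact (Complex.continuous_re.tendsto _).comp h1
    have hcμ : 0 < (c / μ).re := by
      rw [Complex.div_ofReal_re]; exact div_pos hc hμpos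
    filter_upwards [self_mem_nhdsWithin, hBt.eventually hevU, hB1t.eventually hevU,
      hBst.eventually hevU, hqt.eventually (lt_mem_nhds hcμ), hmt.eventually_ne hμ0,
      hsnd.eventually hlam, hπt.eventually hU] with p hp hu hu1 hus hq hm0 hl hpU hne
    by_contra hnot
    have hd : φ (Ring.inverse (B p) v) = 1 := by
      by_contra hne1
      have := isUnit_sub_rankOne (B p) P v φ hPφ hu hne1
      rw [hBdef] at this
      simp only [add_sub_cancel_right] at this
      exact hnot this
    have hd1 : 1 - φ (Ring.inverse (B (π p)) v) = s p * e p := by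
      obtain ⟨Pp, hPp0, -, -, -, hPp⟩ := hsimple (π p) hpU
      obtain ⟨y, hy⟩ : ∃ y, Pp y ≠ 0 := by
        by_contra! hall
        exact hPp0 (ContinuousLinearMap.ext hall)
      refine one_sub_eq_of_eigenvector (B (π p)) P v φ hPφ (s p) hu1 hus (Pp y) hy ?_
      have h1 : renewalRzt Rt 1 p.2 (Pp y) = lam 1 p.2 • Pp y :=
        congrArg (fun T : L →L[ℂ] L => T y) hPp
      simp only [hBdef, hπ, add_sub_cancel_right, sub_apply,
        one_apply_eq_self, h1, hl, hs, sub_smul, one_smul, sub_sub_cancel]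
    have hd2 : φ (Ring.inverse (B (π p)) v) - φ (Ring.inverse (B p) v) = (1 - p.1) * m p := by
      have hdiff : B p - B (π p) = (1 - p.1) • renewalSlope Rt p.1 p.2 := by
        rw [← renewal_sub_eq_slope Rt α₀ C r hrt hr hrsum (by simpa using hp.1) hp.2]
        simp only [hBdef, hπ]
        abel
      have hres : Ring.inverse (B (π p)) - Ring.inverse (B p) =
          (1 - p.1) • (Ring.inverse (B p) * renewalSlope Rt p.1 p.2 *
            Ring.inverse (B (π p))) := by
        rw [← smul_mul_assoc, ← mul_smul_comm, ← hdiff, mul_sub, Ring.inverse_mul_cancel _ hu,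
          sub_mul, mul_assoc, Ring.mul_inverse_cancel _ hu1, one_mul, mul_one]
      have := congrArg (fun T : L →L[ℂ] L => φ (T v)) hres
      simpa [hm] using this
    have hzero : 1 - p.1 = -((c + b p.2) * e p / m p) * ((Mf |p.2| : ℝ) : ℂ) := by
      have h : s p * e p + (1 - p.1) * m p = 0 := by
        rw [← hd1, ← hd2, hd]; ring
      simp only [hs] at h
      field_simp
      linear_combination h
    have hMp := hMnonneg |p.2| (Set.mem_Ici.2 (abs_nonneg _))
    have hre := congrArg Complex.re hzero
    rw [Complex.re_mul_ofReal, Complex.sub_re, Complex.one_re, Complex.neg_re] at hre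
    have hzre : p.1.re ≤ 1 :=
      (Complex.re_le_norm _).trans (by simpa using hp.1)
    have hM0 : Mf |p.2| = 0 := by
      by_contra h
      have : 0 < Mf |p.2| := lt_of_le_of_ne hMp (Ne.symm h)
      nlinarith [mul_pos hq this]
    have ht0 : p.2 = 0 := abs_eq_zero.1 ((hMzero _ (Set.mem_Ici.2 (abs_nonneg _))).1 hM0)
    rw [hM0] at hzero
    have hz1 : p.1 = 1 := by
      have : 1 - p.1 = 0 := by simpa using hzero
      exact (sub_eq_zero.1 this).symm
    exact hne (Prod.ext hz1 ht0)
  have hloc : ∀ z₀ ∈ Metric.closedBall (0 : ℂ) 1,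
      ∀ᶠ p : ℂ × ℝ in 𝓝[Metric.closedBall 0 1 ×ˢ Set.Icc (-α₀) α₀] (z₀, 0),
        p ≠ (1, 0) → IsUnit (1 - renewalRzt Rt p.1 p.2) := by
    intro z₀ hz₀
    by_cases h1 : z₀ = 1
    · rw [h1]; exact hone
    · have hu := hinv z₀ (by simpa using hz₀) h1
      have ht := tendsto_const_nhds (x := (1 : L →L[ℂ] L)) |>.sub (hcont z₀)
      exact (ht.eventually (Units.isOpen.mem_nhds hu)).mono fun p hp _ => hp
  have hall : ∀ᶠ t : ℝ in 𝓝 0, ∀ z ∈ Metric.closedBall (0 : ℂ) 1,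
      t ∈ Set.Icc (-α₀) α₀ → (z, t) ≠ (1, 0) → IsUnit (1 - renewalRzt Rt z t) := by
    refine (isCompact_closedBall (0 : ℂ) 1).eventually_forall_of_forall_eventually
      (P := fun (t : ℝ) (z : ℂ) => z ∈ Metric.closedBall (0 : ℂ) 1 →
        t ∈ Set.Icc (-α₀) α₀ → (z, t) ≠ (1, 0) → IsUnit (1 - renewalRzt Rt z t)) ?_
      |>.mono fun t h z hz => h z hz hz
    intro z₀ hz₀
    have h := eventually_nhdsWithin_iff.1 (hloc z₀ hz₀)
    have hsw := (continuous_swap.tendsto ((0 : ℝ), z₀)).eventually h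
    exact hsw.mono fun q hq hz ht => hq ⟨hz, ht⟩
  obtain ⟨ε, hε, hεall⟩ := Metric.eventually_nhds_iff.1 hall
  refine ⟨min (ε / 2) α₀, lt_min (half_pos hε) hα₀, min_le_right _ _, ?_⟩
  intro z t hz ht hne
  refine hεall (y := t) ?_ z (by simpa using hz)
    (abs_le.1 (ht.trans (min_le_right _ _))) hne
  rw [Real.dist_eq, sub_zero]
  linarith [ht.trans (min_le_left _ _)]
end

section
/- Key eigenvalue estimate in the Wiener algebra: let μ > 0, c ∈ ℂ with Re(c) > 0, M : [0,∞) → [0,∞) continuous with M(s) = 0 iff s = 0, α₀ > 0, and let λ̃ : S¹ × [−α₀, α₀] → ℂ be continuous and satisfy: (i) λ̃(1,0) = 1 and the function z ↦ (λ̃(z,0) − 1)/(z − 1), extended by the value μ at z = 1, is continuous and belongs to A(ℂ); (ii) λ̃(1,t) = 1 − (c + b(t)) M(|t|) for some function b with b(t) → 0 as t → 0; (iii) for each t the function z ↦ (λ̃(z,t) − λ̃(1,t))/(z − 1) − (λ̃(z,0) − λ̃(1,0))/(z − 1) (extended continuously at z = 1) belongs to A(ℂ), and its A(ℂ)-norm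 tends to 0 as t → 0. Then, as t → 0 with t ≠ 0, ‖ z ↦ (1 − λ̃(z,t))/(1 − (1 − (c/μ)M(|t|)) z) − z ↦ (1 − λ̃(z,0))/(1 − z) ‖_{A(ℂ)} → 0, where the second function is extended by the value μ at z = 1 (note that for t ≠ 0 the denominator 1 − (1 − (c/μ)M(|t|))z does not vanish on S¹). -/
/-!
Write `m = M(|t|)`, `d = c / μ`, `ρ = 1 - d m` and `D(z) = 1 - ρ z = (1 - z) + d m z`. Hypotheses
(i)–(iii) give `1 - λ̃(z,t) = (c + b) m + (1 - z) (F + K)`, and hence, with `G(z) = μ - z F(z)`,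

  `(1 - λ̃(z,t)) / D - F = b · m / D + K · (1 - z) / D + d · (m / D) · G`.

Since `Re d > 0`, `1 - |ρ|` is at least `(Re d / 2) m` for small `m` (`one_sub_norm_ge`), so the
geometric series bounds `m / D` in `A(ℂ)` by `C = 2 / Re d`, and
`(z - 1) / D = -1 + d z · m / D` by `E = 1 + |d| C`. The first two terms therefore tend to `0` with
`b` and `K`. For the third, `G ∈ A(ℂ)` and `G(1) = 0`, so `G = ∑ gᵢ (z ^ kᵢ - 1)` with
`∑ |gᵢ| < ∞`; the norm of `(m / D) (z ^ kᵢ - 1)` is at most `2 C` and also at most `m |kᵢ| E`, and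
dominated convergence for series finishes the proof (`wienerBound_mul_of_apply_one_eq_zero`,
`tendsto_tsum_min`).

Norms in `A(ℂ)` are handled through the predicate `WienerBound`; `WienerBound.of_summable` and
`WienerBound.summable_and_tsum_le` translate between it and the Fourier coefficients
`fourierCoeffA`.
-/

open MeasureTheory Filter Topology

/-! ### Norm bounds in the Wiener algebra -/

/-- `WienerBound f C` says that on the unit circle `f` is an absolutely convergent series
`∑ aᵢ z ^ kᵢ` with `∑ ‖aᵢ‖ ≤ C`, i.e. `f ∈ A(ℂ)` and `‖f‖_{A(ℂ)} ≤ C`. The exponents `kᵢ` may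
repeat, which makes the closure under products and infinite sums immediate. -/
def WienerBound (f : ℂ → ℂ) (C : ℝ) : Prop :=
  ∃ (ι : Type) (_ : Countable ι) (a : ι → ℂ) (k : ι → ℤ),
    Summable (fun i => ‖a i‖) ∧ ∑' i, ‖a i‖ ≤ C ∧
      ∀ z : ℂ, ‖z‖ = 1 → HasSum (fun i => a i * z ^ k i) (f z)

lemma hasSum_of_eq {ι : Type} {u v : ι → ℂ} {s : ℂ} (h : HasSum v s) (e : ∀ i, u i = v i) :
    HasSum u s := (funext e : u = v) ▸ h

namespace WienerBound

lemma norm_term {z : ℂ} (hz : ‖z‖ = 1) (a : ℂ) (k : ℤ) : ‖a * z ^ k‖ = ‖a‖ := by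
  rw [norm_mul, norm_zpow, hz, one_zpow, mul_one]

lemma congr {f g : ℂ → ℂ} {C : ℝ} (hf : WienerBound f C) (h : ∀ z, ‖z‖ = 1 → f z = g z) :
    WienerBound g C := by
  obtain ⟨ι, hι, a, k, ha, hC, hs⟩ := hf
  exact ⟨ι, hι, a, k, ha, hC, fun z hz => h z hz ▸ hs z hz⟩

lemma mono {f : ℂ → ℂ} {C D : ℝ} (hf : WienerBound f C) (h : C ≤ D) : WienerBound f D := by
  obtain ⟨ι, hι, a, k, ha, hC, hs⟩ := hf
  exact ⟨ι, hι, a, k, ha, hC.trans h, hs⟩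

lemma monomial (a : ℂ) (k : ℤ) : WienerBound (fun z => a * z ^ k) ‖a‖ :=
  ⟨Unit, inferInstance, fun _ => a, fun _ => k, (hasSum_fintype _).summable, by simp, fun z _ => by
    simp⟩

lemma const (a : ℂ) : WienerBound (fun _ => a) ‖a‖ := by
  simpa using monomial a 0

/-- A series of functions converging pointwise, with summable `A(ℂ)`-bounds, lies in `A(ℂ)`. -/
lemma tsum {κ : Type} [Countable κ] {h : κ → ℂ → ℂ} {C : κ → ℝ} {f : ℂ → ℂ}
    (hh : ∀ j, WienerBound (h j) (C j)) (hC : Summable C)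
    (hf : ∀ z : ℂ, ‖z‖ = 1 → HasSum (fun j => h j z) (f z)) :
    WienerBound f (∑' j, C j) := by
  choose ι hι a k ha haC hs using hh
  have hsum : Summable (fun j => ∑' i, ‖a j i‖) :=
    Summable.of_nonneg_of_le (fun j => tsum_nonneg fun _ => norm_nonneg _) haC hC
  have hsig : Summable (fun p : (j : κ) × ι j => ‖a p.1 p.2‖) :=
    (summable_sigma_of_nonneg fun _ => norm_nonneg _).2 ⟨ha, hsum⟩
  refine ⟨(j : κ) × ι j, inferInstance, fun p => a p.1 p.2, fun p => k p.1 p.2, hsig, ?_, ?_⟩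
  · rw [Summable.tsum_sigma' ha hsig]
    exact hsum.tsum_le_tsum haC hC
  · intro z hz
    refine HasSum.sigma_of_hasSum (hf z hz) (fun j => hs j z hz) (Summable.of_norm ?_)
    simpa only [norm_term hz] using hsig

lemma add {f g : ℂ → ℂ} {C D : ℝ} (hf : WienerBound f C) (hg : WienerBound g D) :
    WienerBound (fun z => f z + g z) (C + D) := by
  have := tsum (κ := Bool) (h := fun i => cond i f g) (C := fun i => cond i C D)
    (f := fun z => f z + g z)
    (by rintro (_ | _) <;> assumption) (hasSum_fintype _).summable
    (fun z _ => by simpa using hasSum_fintype (fun i : Bool => (cond i f g) z))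
  simpa using this

lemma mul {f g : ℂ → ℂ} {C D : ℝ} (hf : WienerBound f C) (hg : WienerBound g D) :
    WienerBound (fun z => f z * g z) (C * D) := by
  obtain ⟨ι, hι, a, k, ha, hC, hs⟩ := hf
  obtain ⟨κ, hκ, b, l, hb, hD, hr⟩ := hg
  refine ⟨ι × κ, inferInstance, fun p => a p.1 * b p.2, fun p => k p.1 + l p.2, ha.mul_norm hb,
    ?_, fun z hz => ?_⟩
  · have h1 : (∑' i, ‖a i‖) * ∑' j, ‖b j‖ = ∑' p : ι × κ, ‖a p.1‖ * ‖b p.2‖ :=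
      tsum_mul_tsum_of_summable_norm (by simpa using ha) (by simpa using hb)
    simp only [norm_mul]
    rw [← h1]
    exact mul_le_mul hC hD (tsum_nonneg fun _ => norm_nonneg _)
      ((tsum_nonneg fun _ => norm_nonneg _).trans hC)
  · have hz0 : z ≠ 0 := by rintro rfl; simp at hz
    have ha' : Summable fun i => ‖a i * z ^ k i‖ := by simpa only [norm_term hz] using ha
    have hb' : Summable fun j => ‖b j * z ^ l j‖ := by simpa only [norm_term hz] using hb
    have := (hs z hz).mul (hr z hz) (ha'.mul_norm hb').of_norm
    refine hasSum_of_eq this fun p => ?_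
    rw [zpow_add₀ hz0]
    ring

lemma const_mul {f : ℂ → ℂ} {C : ℝ} (hf : WienerBound f C) (a : ℂ) :
    WienerBound (fun z => a * f z) (‖a‖ * C) := (const a).mul hf

lemma nonneg {f : ℂ → ℂ} {C : ℝ} (hf : WienerBound f C) : 0 ≤ C := by
  obtain ⟨ι, hι, a, k, ha, hC, hs⟩ := hf
  exact (tsum_nonneg fun _ => norm_nonneg _).trans hC

lemma continuousOn {f : ℂ → ℂ} {C : ℝ} (hf : WienerBound f C) :
    ContinuousOn f (Metric.sphere (0 : ℂ) 1) := by
  obtain ⟨ι, hι, a, k, ha, hC, hs⟩ := hf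
  have h : ContinuousOn (fun z => ∑' i, a i * z ^ k i) (Metric.sphere (0 : ℂ) 1) := by
    refine continuousOn_tsum (fun i => ?_) ha fun i z hz => ?_
    · refine continuousOn_const.mul (continuousOn_id.zpow₀ _ fun z hz => Or.inl ?_)
      rintro rfl
      simp at hz
    · exact (norm_term (by simpa using hz) _ _).le
  exact h.congr fun z hz => (hs z (by simpa using hz)).tsum_eq.symm

/-- Orthogonality of the characters of the circle. -/
lemma integral_char (m : ℤ) :
    ((2 * (Real.pi : ℂ)))⁻¹ • ∫ θ in (0:ℝ)..(2 * Real.pi), Complex.exp ((m * Complex.I) * (θ : ℂ))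
      = if m = 0 then 1 else 0 := by
  have hpi : (Real.pi : ℂ) ≠ 0 := by exact_mod_cast Real.pi_ne_zero
  split_ifs with h
  · subst h
    simp
    field_simp
  · rw [integral_exp_mul_complex (by simp [h])]
    have : Complex.exp (m * Complex.I * ((2 * Real.pi : ℝ) : ℂ)) = 1 :=
      Complex.exp_eq_one_iff.2 ⟨m, by push_cast; ring⟩
    rw [this]
    simp

/-- Integrating the series term by term: the `n`-th Fourier coefficient collects the terms with
exponent `n`. -/
lemma hasSum_fourierCoeffA {ι : Type} [Countable ι] {a : ι → ℂ} {k : ι → ℤ} {f : ℂ → ℂ}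
    (ha : Summable (fun i => ‖a i‖))
    (hs : ∀ z : ℂ, ‖z‖ = 1 → HasSum (fun i => a i * z ^ k i) (f z)) (n : ℤ) :
    HasSum (fun i => if k i = n then a i else 0) (fourierCoeffA f n) := by
  have key : HasSum (fun i => ∫ θ in (0:ℝ)..(2 * Real.pi),
      a i * Complex.exp ((((k i - n : ℤ) : ℂ) * Complex.I) * (θ : ℂ)))
      (∫ θ in (0:ℝ)..(2 * Real.pi),
        Complex.exp (-(n : ℂ) * Complex.I * (θ : ℂ)) • f (Complex.exp (Complex.I * (θ : ℂ)))) := by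
    refine intervalIntegral.hasSum_integral_of_dominated_convergence (fun i _ => ‖a i‖)
      (fun i => ?_) (fun i => ?_) ?_ ?_ ?_
    · exact (Continuous.aestronglyMeasurable (by fun_prop))
    · refine Eventually.of_forall fun θ _ => ?_
      have : (((k i - n : ℤ) : ℂ) * Complex.I) * (θ : ℂ)
          = (((k i - n : ℤ) * θ : ℝ) : ℂ) * Complex.I := by push_cast; ring
      rw [norm_mul, this, Complex.norm_exp_ofReal_mul_I, mul_one]
    · exact Eventually.of_forall fun _ _ => ha
    · exact intervalIntegrable_const
    · refine Eventually.of_forall fun θ _ => ?_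
      have hn : ‖Complex.exp (Complex.I * (θ : ℂ))‖ = 1 := by
        rw [mul_comm, Complex.norm_exp_ofReal_mul_I]
      have := (hs _ hn).mul_left (Complex.exp (-(n : ℂ) * Complex.I * (θ : ℂ)))
      rw [smul_eq_mul]
      refine hasSum_of_eq this fun i => ?_
      rw [← Complex.exp_int_mul, mul_left_comm, ← Complex.exp_add]
      congr 2
      push_cast
      ring
  have := key.const_smul ((2 * (Real.pi : ℂ)))⁻¹
  unfold fourierCoeffA
  convert this using 2 with i
  rw [intervalIntegral.integral_const_mul, ← mul_smul_comm, integral_char]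
  simp [sub_eq_zero]

/-- Grouping the terms by exponent only decreases the sum of absolute values. -/
lemma summable_and_tsum_le {f : ℂ → ℂ} {C : ℝ} (hf : WienerBound f C) :
    (Summable fun n : ℤ => ‖fourierCoeffA f n‖) ∧ ∑' n : ℤ, ‖fourierCoeffA f n‖ ≤ C := by
  obtain ⟨ι, hι, a, k, ha, hC, hs⟩ := hf
  have hfib := ha.hasSum.tsum_fiberwise k
  have hle : ∀ n : ℤ, ‖fourierCoeffA f n‖ ≤ ∑' i : k ⁻¹' {n}, ‖a i‖ := by
    intro n
    have h1 := (hasSum_fourierCoeffA ha hs n).tsum_eq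
    have h2 : (∑' i, if k i = n then a i else 0) = ∑' i : k ⁻¹' {n}, a i := by
      rw [tsum_subtype (k ⁻¹' {n}) a]
      exact tsum_congr fun i => by by_cases h : k i = n <;> simp [h]
    rw [← h1, h2]
    exact norm_tsum_le_tsum_norm (ha.subtype _)
  have hsum := Summable.of_nonneg_of_le (fun n => norm_nonneg _) hle hfib.summable
  exact ⟨hsum, (hsum.tsum_le_tsum hle hfib.summable).trans (hfib.tsum_eq.le.trans hC)⟩

/-- A continuous function with absolutely summable Fourier coefficients is the sum of its Fourier
series. -/
lemma of_summable {f : ℂ → ℂ} (hf : ContinuousOn f (Metric.sphere (0 : ℂ) 1))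
    (hs : Summable fun n : ℤ => ‖fourierCoeffA f n‖) :
    WienerBound f (∑' n : ℤ, ‖fourierCoeffA f n‖) := by
  have : Fact (0 < 2 * Real.pi) := ⟨Real.two_pi_pos⟩
  have hpi : (Real.pi : ℂ) ≠ 0 := by exact_mod_cast Real.pi_ne_zero
  let g : C(AddCircle (2 * Real.pi), ℂ) :=
    ⟨fun x => f (AddCircle.toCircle x), hf.comp_continuous
      (continuous_subtype_val.comp AddCircle.continuous_toCircle) fun x => by
        simpa using Circle.norm_coe _⟩
  have hg : ∀ θ : ℝ, g (θ : AddCircle (2 * Real.pi)) = f (Complex.exp (Complex.I * (θ : ℂ))) := by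
    intro θ
    change f (AddCircle.toCircle (θ : AddCircle (2 * Real.pi))) = _
    rw [AddCircle.toCircle_apply_mk, div_self Real.two_pi_pos.ne', one_mul, Circle.coe_exp,
      mul_comm]
  have hfour : ∀ (n : ℤ) (θ : ℝ), fourier n (θ : AddCircle (2 * Real.pi))
      = Complex.exp ((n : ℂ) * Complex.I * (θ : ℂ)) := by
    intro n θ
    rw [fourier_coe_apply]
    congr 1
    push_cast
    field_simp
  have hcoef : ∀ n, fourierCoeff g n = fourierCoeffA f n := by
    intro n
    rw [fourierCoeff_eq_intervalIntegral g n 0, fourierCoeffA]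
    simp only [hg, hfour, zero_add]
    rw [← Complex.coe_smul]
    push_cast
    simp
  refine ⟨ℤ, inferInstance, fourierCoeffA f, id, hs, le_rfl, fun z hz => ?_⟩
  have hgs := has_pointwise_sum_fourier_series_of_summable (f := g)
    (by simp only [funext hcoef]; exact hs.of_norm) (z.arg : AddCircle (2 * Real.pi))
  have hz' : Complex.exp (Complex.I * (z.arg : ℂ)) = z := by
    have := Complex.norm_mul_exp_arg_mul_I z
    rw [hz] at this
    rw [mul_comm]
    simpa using this
  rw [hg, hz'] at hgs
  convert hgs using 2 with n
  rw [hcoef, hfour, smul_eq_mul, mul_assoc, Complex.exp_int_mul, hz']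
  rfl

/-- The geometric series: `1 / (1 - ρ z)` has norm at most `1 / (1 - |ρ|)` in `A(ℂ)`. -/
lemma geometric {ρ : ℂ} (hρ : ‖ρ‖ < 1) :
    WienerBound (fun z => (1 - ρ * z)⁻¹) (1 - ‖ρ‖)⁻¹ := by
  have hs := hasSum_geometric_of_lt_one (norm_nonneg ρ) hρ
  refine ⟨ℕ, inferInstance, fun n => ρ ^ n, fun n => n, by simpa using hs.summable,
    by simpa using hs.tsum_eq.le, fun z hz => ?_⟩
  have := hasSum_geometric_of_norm_lt_one (ξ := ρ * z) (by rw [norm_mul, hz, mul_one]; exact hρ)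
  simpa [mul_pow] using this

/-- Writing `z ^ k - 1` as a telescoping sum of `|k|` monomials times `z - 1`. -/
lemma zpow_sub_one_mul {q : ℂ → ℂ} {E : ℝ} (hq : WienerBound (fun z => (z - 1) * q z) E) (k : ℤ) :
    WienerBound (fun z => (z ^ k - 1) * q z) (|(k : ℝ)| * E) := by
  have hnat : ∀ n : ℕ, WienerBound (fun z => (z ^ n - 1) * q z) (n * E) := by
    intro n
    induction n with
    | zero => simpa using const 0
    | succ n ih =>
      have h1 := ((monomial 1 1).mul ih).add hq
      refine (h1.congr fun z _ => ?_).mono ?_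
      · simp only [zpow_one]; ring
      · simp; linarith
  obtain ⟨n, rfl | rfl⟩ := k.eq_nat_or_neg
  · simpa using hnat n
  · have h1 := (monomial (-1) (-n : ℤ)).mul (hnat n)
    refine (h1.congr fun z hz => ?_).mono (by simp)
    have hz0 : z ≠ 0 := by rintro rfl; simp at hz
    have : z ^ n ≠ 0 := pow_ne_zero _ hz0
    rw [zpow_neg, zpow_natCast]
    field_simp
    ring

end WienerBound

/-! ### Estimates for the resolvent factor `1 / (1 - ρ z)` -/

/-- For `ρ = 1 - d m` with `Re d > 0`, `1 - |ρ|` is at least a multiple of `m` for small `m > 0`. -/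
lemma one_sub_norm_ge {d : ℂ} {m : ℝ} (hm : 0 < m)
    (hsmall : m * ‖d‖ ^ 2 ≤ d.re) : d.re / 2 * m ≤ 1 - ‖1 - d * (m : ℂ)‖ := by
  have h1 : ‖1 - d * (m : ℂ)‖ ^ 2 = 1 - 2 * d.re * m + ‖d‖ ^ 2 * m ^ 2 := by
    rw [Complex.sq_norm, Complex.sq_norm, Complex.normSq_apply, Complex.normSq_apply]
    simp
    ring
  nlinarith [sq_nonneg (‖1 - d * (m : ℂ)‖ - 1), mul_le_mul_of_nonneg_left hsmall hm.le]

/-- If `G = ∑ gᵢ z ^ kᵢ` vanishes at `1`, then `G = ∑ gᵢ (z ^ kᵢ - 1)`. Each `m q (z ^ kᵢ - 1)` is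
bounded in `A(ℂ)` uniformly in `i`, and also by `O(m |kᵢ|)`. -/
lemma wienerBound_mul_of_apply_one_eq_zero {ι : Type} [Countable ι] {g : ι → ℂ} {k : ι → ℤ}
    {G q : ℂ → ℂ} {m C E : ℝ} (hg : Summable fun i => ‖g i‖)
    (hG : ∀ z : ℂ, ‖z‖ = 1 → HasSum (fun i => g i * z ^ k i) (G z)) (hG1 : G 1 = 0)
    (hm : 0 ≤ m) (hC : WienerBound (fun z => (m : ℂ) * q z) C)
    (hE : WienerBound (fun z => (z - 1) * q z) E) :
    WienerBound (fun z => (m : ℂ) * q z * G z)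
      (∑' i, ‖g i‖ * min (2 * C) (m * (|(k i : ℝ)| * E))) := by
  have hC0 := hC.nonneg
  have hE0 := hE.nonneg
  refine WienerBound.tsum (h := fun i z => g i * ((m : ℂ) * ((z ^ k i - 1) * q z)))
    (fun i => ?_) ?_ fun z hz => ?_
  · refine WienerBound.const_mul ?_ (g i)
    rcases min_choice (2 * C) (m * (|(k i : ℝ)| * E)) with h | h <;> rw [h]
    · refine ((((WienerBound.monomial 1 (k i)).add (WienerBound.const (-1))).mul hC).congr
        fun z _ => ?_).mono ?_
      · ring
      · norm_num
    · refine ((hE.zpow_sub_one_mul (k i)).const_mul (m : ℂ)).mono (le_of_eq ?_)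
      rw [Complex.norm_real, Real.norm_of_nonneg hm]
  · refine Summable.of_nonneg_of_le (fun i => by positivity) (fun i => ?_) (hg.mul_right (2 * C))
    exact mul_le_mul_of_nonneg_left (min_le_left _ _) (norm_nonneg _)
  · have h1 := hG 1 (by simp)
    rw [hG1] at h1
    have h2 := ((hG z hz).sub h1).mul_left ((m : ℂ) * q z)
    rw [sub_zero] at h2
    refine hasSum_of_eq h2 fun i => ?_
    rw [one_zpow]
    ring

/-- Dominated convergence for the bound of `wienerBound_mul_of_apply_one_eq_zero` as `m → 0`. -/
lemma tendsto_tsum_min {ι : Type} {g : ι → ℂ} {k : ι → ℤ} (hg : Summable fun i => ‖g i‖)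
    {C E : ℝ} (hC : 0 ≤ C) (hE : 0 ≤ E) {l : Filter ℝ} {m : ℝ → ℝ} (hm : Tendsto m l (𝓝 0))
    (hm0 : ∀ᶠ t in l, 0 ≤ m t) :
    Tendsto (fun t => ∑' i, ‖g i‖ * min (2 * C) (m t * (|(k i : ℝ)| * E))) l (𝓝 0) := by
  have h := tendsto_tsum_of_dominated_convergence (𝓕 := l)
    (f := fun t i => ‖g i‖ * min (2 * C) (m t * (|(k i : ℝ)| * E))) (g := fun _ => (0 : ℝ))
    (hg.mul_right (2 * C)) (fun i => ?_) ?_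
  · simpa using h
  · have h1 : Tendsto (fun t => ‖g i‖ * min (2 * C) (m t * (|(k i : ℝ)| * E))) l
        (𝓝 (‖g i‖ * min (2 * C) (0 * (|(k i : ℝ)| * E)))) :=
      tendsto_const_nhds.mul (tendsto_const_nhds.min (hm.mul_const _))
    simpa [hC] using h1
  · filter_upwards [hm0] with t ht i
    rw [Real.norm_of_nonneg (by positivity)]
    exact mul_le_mul_of_nonneg_left (min_le_left _ _) (norm_nonneg _)

/-- Key eigenvalue estimate in the Wiener algebra `A(ℂ)`: as `t → 0`, `t ≠ 0`, the function
`z ↦ (1 - λ̃(z,t))/(1 - (1 - (c/μ)M(|t|))z)` converges in `A(ℂ)`-norm to the function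
`z ↦ (1 - λ̃(z,0))/(1 - z)` (extended by `μ` at `z = 1`). -/
theorem eigenvalue_wiener_algebra_estimate
    (μ : ℝ) (hμ : 0 < μ) (c : ℂ) (hc : 0 < c.re)
    (Mf : ℝ → ℝ) (hMcont : ContinuousOn Mf (Set.Ici 0))
    (hMzero : ∀ s ∈ Set.Ici (0:ℝ), (Mf s = 0 ↔ s = 0))
    (hMnonneg : ∀ s ∈ Set.Ici (0:ℝ), 0 ≤ Mf s)
    (α₀ : ℝ) (hα₀ : 0 < α₀)
    (lam : ℂ → ℝ → ℂ)
    (hlamcont : ContinuousOn (fun p : ℂ × ℝ => lam p.1 p.2)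
      (Metric.sphere (0:ℂ) 1 ×ˢ Set.Icc (-α₀) α₀))
    -- (i) : the function (λ̃(z,0) - 1)/(z - 1), extended by μ at z = 1, lies in A(ℂ)
    (F : ℂ → ℂ) (hlam10 : lam 1 0 = 1)
    (hFeq : ∀ z ∈ Metric.sphere (0:ℂ) 1, z ≠ 1 → F z = (lam z 0 - 1) / (z - 1))
    (hF1 : F 1 = (μ : ℂ))
    (hFcont : ContinuousOn F (Metric.sphere (0:ℂ) 1))
    (hFsum : Summable fun n : ℤ => ‖fourierCoeffA F n‖)
    -- (ii) : λ̃(1,t) = 1 - (c + b(t)) M(|t|) with b(t) → 0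
    (b : ℝ → ℂ) (hb : Tendsto b (𝓝 0) (𝓝 0))
    (hlam1t : ∀ t ∈ Set.Icc (-α₀) α₀, lam 1 t = 1 - (c + b t) * ((Mf |t| : ℝ) : ℂ))
    -- (iii) : K(·,t) = (λ̃(z,t) - λ̃(1,t))/(z-1) - (λ̃(z,0) - λ̃(1,0))/(z-1) lies in A(ℂ)
    --         and tends to 0 in A(ℂ) as t → 0
    (K : ℝ → ℂ → ℂ)
    (hKeq : ∀ t ∈ Set.Icc (-α₀) α₀, ∀ z ∈ Metric.sphere (0:ℂ) 1, z ≠ 1 →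
      K t z = (lam z t - lam 1 t) / (z - 1) - (lam z 0 - lam 1 0) / (z - 1))
    (hKcont : ∀ t ∈ Set.Icc (-α₀) α₀, ContinuousOn (K t) (Metric.sphere (0:ℂ) 1))
    (hKsum : ∀ t ∈ Set.Icc (-α₀) α₀, Summable fun n : ℤ => ‖fourierCoeffA (K t) n‖)
    (hKtend : Tendsto (fun t => ∑' n : ℤ, ‖fourierCoeffA (K t) n‖) (𝓝 0) (𝓝 0)) :
    (∀ᶠ t in 𝓝[≠] (0:ℝ),
      ContinuousOn
        (fun z => (1 - lam z t) / (1 - (1 - (c / (μ : ℂ)) * ((Mf |t| : ℝ) : ℂ)) * z) - F z)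
        (Metric.sphere (0:ℂ) 1) ∧
      Summable fun n : ℤ =>
        ‖fourierCoeffA
          (fun z => (1 - lam z t) / (1 - (1 - (c / (μ : ℂ)) * ((Mf |t| : ℝ) : ℂ)) * z) - F z)
          n‖) ∧
    Tendsto
      (fun t => ∑' n : ℤ,
        ‖fourierCoeffA
          (fun z => (1 - lam z t) / (1 - (1 - (c / (μ : ℂ)) * ((Mf |t| : ℝ) : ℂ)) * z) - F z)
          n‖)
      (𝓝[≠] (0:ℝ)) (𝓝 0) := by
  have hμ' : (μ : ℂ) ≠ 0 := by exact_mod_cast hμ.ne'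
  set d : ℂ := c / (μ : ℂ) with hd
  have hcd : c = d * μ := by rw [hd]; field_simp
  have hdre : 0 < d.re := by
    rw [hd, Complex.div_ofReal_re]
    positivity
  -- `C` bounds `m / (1 - ρ z)` and `E` bounds `(z - 1) / (1 - ρ z)`, for `ρ = 1 - d m`.
  set C : ℝ := 2 / d.re with hCdef
  set E : ℝ := 1 + ‖d‖ * C with hEdef
  have hC0 : 0 ≤ C := by positivity
  have hE0 : 0 ≤ E := by positivity
  have hm : Tendsto (fun t : ℝ => Mf |t|) (𝓝[≠] 0) (𝓝 0) := by
    have h0 : Mf 0 = 0 := (hMzero 0 (by simp)).2 rfl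
    have h1 : Tendsto Mf (𝓝[Set.Ici 0] 0) (𝓝 0) := by
      simpa [ContinuousWithinAt, h0] using hMcont 0 (by simp)
    refine h1.comp (tendsto_nhdsWithin_iff.2 ⟨?_, Eventually.of_forall fun t => abs_nonneg t⟩)
    exact ((continuous_abs.tendsto' 0 0 abs_zero)).mono_left nhdsWithin_le_nhds
  -- `G z = μ - z F z` lies in `A(ℂ)` and vanishes at `1`.
  have hG := (WienerBound.const (μ : ℂ)).add
    ((WienerBound.monomial (-1) 1).mul (WienerBound.of_summable hFcont hFsum))
  obtain ⟨ι, hι, g, k, hg, -, hgs⟩ := hG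
  have hbound : ∀ᶠ t in 𝓝[≠] (0 : ℝ), WienerBound
      (fun z => (1 - lam z t) / (1 - (1 - d * ((Mf |t| : ℝ) : ℂ)) * z) - F z)
      (‖b t‖ * C + E * (∑' n : ℤ, ‖fourierCoeffA (K t) n‖)
        + ‖d‖ * ∑' i, ‖g i‖ * min (2 * C) (Mf |t| * (|(k i : ℝ)| * E))) := by
    have hα : ∀ᶠ t in 𝓝[≠] (0 : ℝ), t ∈ Set.Icc (-α₀) α₀ :=
      nhdsWithin_le_nhds (Icc_mem_nhds (by linarith) hα₀)
    have hsm : ∀ᶠ t in 𝓝[≠] (0 : ℝ), Mf |t| * ‖d‖ ^ 2 < d.re := by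
      have := hm.mul_const (‖d‖ ^ 2)
      rw [zero_mul] at this
      exact this.eventually_lt_const hdre
    filter_upwards [hα, hsm, self_mem_nhdsWithin] with t htα hts ht0
    have hmpos : 0 < Mf |t| := lt_of_le_of_ne (hMnonneg _ (abs_nonneg t)) fun h =>
      ht0 (abs_eq_zero.1 ((hMzero _ (abs_nonneg t)).1 h.symm))
    have hlam := hlam1t t htα
    have hKe := hKeq t htα
    have hK := WienerBound.of_summable (hKcont t htα) (hKsum t htα)
    generalize Mf |t| = m at *
    have hge := one_sub_norm_ge hmpos hts.le
    have hgepos : 0 < d.re / 2 * m := by positivity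
    have hlt : ‖1 - d * (m : ℂ)‖ < 1 := by linarith
    have hD : ∀ z : ℂ, ‖z‖ = 1 → 1 - (1 - d * (m : ℂ)) * z ≠ 0 := by
      intro z hz h
      have h1 : ‖(1 - d * (m : ℂ)) * z‖ = 1 := by rw [← sub_eq_zero.1 h, norm_one]
      rw [norm_mul, hz, mul_one] at h1
      linarith
    have hqC : WienerBound (fun z => (m : ℂ) * (1 - (1 - d * (m : ℂ)) * z)⁻¹) C := by
      refine ((WienerBound.geometric hlt).const_mul (m : ℂ)).mono ?_
      rw [Complex.norm_real, Real.norm_of_nonneg hmpos.le, hCdef]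
      calc m * (1 - ‖1 - d * (m : ℂ)‖)⁻¹ ≤ m * (d.re / 2 * m)⁻¹ := by gcongr
        _ = 2 / d.re := by field_simp
    have hqE : WienerBound (fun z => (z - 1) * (1 - (1 - d * (m : ℂ)) * z)⁻¹) E := by
      refine ((WienerBound.const (-1)).add ((WienerBound.monomial d 1).mul hqC)).congr
        (fun z hz => ?_) |>.mono (by simp [hEdef])
      have hq := mul_inv_cancel₀ (hD z hz)
      rw [zpow_one]
      linear_combination hq
    have hG := wienerBound_mul_of_apply_one_eq_zero hg hgs (by simp [hF1]) hmpos.le hqC hqE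
    refine (((hqC.const_mul (b t)).add ((hqE.mul hK).const_mul (-1))).add
      (hG.const_mul d)).congr (fun z hz => ?_) |>.mono (by simp)
    -- `1 - λ(z,t) = (c + b) m + (1 - z) (F + K)` and `1 - ρ z = (1 - z) + d m z`.
    have hnum : 1 - lam z t = (c + b t) * m + (1 - z) * (F z + K t z) := by
      rcases eq_or_ne z 1 with rfl | hz1
      · rw [hlam]; ring
      · have hz1' : z - 1 ≠ 0 := sub_ne_zero.2 hz1
        have hzs : z ∈ Metric.sphere (0 : ℂ) 1 := by simpa using hz
        rw [hKe z hzs hz1, hFeq z hzs hz1, hlam10, hlam]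
        field_simp
        ring
    have hq := mul_inv_cancel₀ (hD z hz)
    rw [hnum, hcd, div_eq_mul_inv, zpow_one]
    linear_combination (-F z) * hq
  have hlim : Tendsto (fun t => ‖b t‖ * C + E * (∑' n : ℤ, ‖fourierCoeffA (K t) n‖)
        + ‖d‖ * ∑' i, ‖g i‖ * min (2 * C) (Mf |t| * (|(k i : ℝ)| * E)))
      (𝓝[≠] (0 : ℝ)) (𝓝 0) := by
    have h1 := (hb.mono_left (nhdsWithin_le_nhds (s := {0}ᶜ))).norm.mul_const C
    have h2 := (hKtend.mono_left (nhdsWithin_le_nhds (s := {0}ᶜ))).const_mul E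
    have h3 := (tendsto_tsum_min (k := k) hg hC0 hE0 hm
      (Eventually.of_forall fun t => hMnonneg _ (abs_nonneg t))).const_mul ‖d‖
    simpa using (h1.add h2).add h3
  refine ⟨hbound.mono fun t ht => ⟨ht.continuousOn, ht.summable_and_tsum_le.1⟩, ?_⟩
  exact squeeze_zero' (Eventually.of_forall fun t => tsum_nonneg fun _ => norm_nonneg _)
    (hbound.mono fun t ht => ht.summable_and_tsum_le.2) hlim
end
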